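/- Under assumption (A1), for any r>0, y∈E and t>0: (i) sup{ q(s,t;z,y) : z ∈ E with |y−z| ≥ r, s<t } < ∞; and (ii) for every x∈E, lim_{s→0} ∫_{B_r^c(z)} q(0,t−s;x,u) q(t−s,t;u,z) du = 0, where B_r(z)={u∈E : |u−z|<r} and B_r^c(z) is its complement in E. -/

import Mathlib

open MeasureTheory Set Filter Topology ProbabilityTheory
open scoped ENNReal NNReal

noncomputable section
attribute [local instance] Classical.propDecidable

/-- Clamp a time to `[0,1]`. -/
def clamp (t : ℝ) : ℝ := max 0 (min t 1)

/-- `φ` has subquadratic growth on `S`. -/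
def SubquadOn (φ : ℝ → ℝ) (S : Set ℝ) : Prop :=
  ∀ α : ℝ, 0 < α → ∃ K : ℝ, ∀ x ∈ S, |φ x| ≤ K + α * x ^ 2

def Subquad2On (φ : ℝ × ℝ → ℝ) (S : Set (ℝ × ℝ)) : Prop :=
  ∀ α : ℝ, 0 < α → ∃ K : ℝ, ∀ x ∈ S, |φ x| ≤ K + α * (x.1 ^ 2 + x.2 ^ 2)

/-- Assumption (A1): bounded, uniformly elliptic, Lipschitz in space and Hölder in time
coefficients on `[0,1] × E`. -/
structure A1 (E : Set ℝ) (b σ : ℝ → ℝ → ℝ) : Prop where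
  bounded : ∃ C : ℝ, ∀ t ∈ Icc (0:ℝ) 1, ∀ z ∈ E, |b t z| ≤ C ∧ |σ t z| ≤ C
  elliptic : ∃ σ₀ : ℝ, 0 < σ₀ ∧ ∀ t ∈ Icc (0:ℝ) 1, ∀ z ∈ E, σ₀ ≤ σ t z
  lipschitz : ∃ K : ℝ, ∀ t ∈ Icc (0:ℝ) 1, ∀ z ∈ E, ∀ z' ∈ E,
      |b t z - b t z'| ≤ K * |z - z'| ∧ |σ t z - σ t z'| ≤ K * |z - z'|
  holder : ∃ K γ : ℝ, 0 < γ ∧ ∀ z ∈ E, ∀ t ∈ Icc (0:ℝ) 1, ∀ t' ∈ Icc (0:ℝ) 1,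
      |b t z - b t' z| ≤ K * |t - t'| ^ γ ∧ |σ t z - σ t' z| ≤ K * |t - t'| ^ γ

/-- Martingale with respect to a (not necessarily monotone-bundled) family of σ-algebras. -/
def MartingaleWRT {Ω : Type*} {m0 : MeasurableSpace Ω} (P : Measure Ω)
    (𝓖 : ℝ → MeasurableSpace Ω) (M : ℝ → Ω → ℝ) : Prop :=
  (∀ t : ℝ, StronglyMeasurable[𝓖 t] (M t)) ∧
  (∀ t : ℝ, Integrable (M t) P) ∧
  ∀ s t : ℝ, s ≤ t → P[M t | 𝓖 s] =ᵐ[P] M s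

/-- The natural filtration of a process. -/
def natFilt {Ω : Type*} {E' : Type*} [MeasurableSpace E'] (X : ℝ → Ω → E') (t : ℝ) :
    MeasurableSpace Ω :=
  ⨆ s ∈ Iic t, MeasurableSpace.comap (X s) inferInstance

/-- Weak (martingale-problem) formulation of the killed SDE
`dZ_t = 1_{Z_t ∈ E} (β_t dt + ς_t dW_t)` on `[s₀,1]`, with (possibly random)
drift `β` and diffusion `ς` evaluated along the trajectory, absorbed upon leaving `E`. -/
def SolvesKilledSDE {Ω : Type*} {m0 : MeasurableSpace Ω} (P : Measure Ω)
    (𝓖 : ℝ → MeasurableSpace Ω) (E : Set ℝ) (β ς : ℝ → Ω → ℝ)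
    (Z : ℝ → Ω → ℝ) (s₀ : ℝ) : Prop :=
  (∀ t : ℝ, Measurable[𝓖 t] (Z t)) ∧
  (∀ᵐ ω ∂P, Continuous fun t => Z t ω) ∧
  (∀ᵐ ω ∂P, ∀ t, s₀ ≤ t → Z t ω ∉ E → ∀ u, t ≤ u → Z u ω = Z t ω) ∧
  ∀ f : ℝ → ℝ, ContDiff ℝ 2 f → HasCompactSupport f →
    MartingaleWRT P 𝓖 (fun t ω =>
      f (Z (max s₀ (min t 1)) ω) -
        ∫ u in s₀..(max s₀ (min t 1)),
          Set.indicator E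
            (fun x => β u ω * deriv f x + ς u ω ^ 2 / 2 * deriv (deriv f) x) (Z u ω))

/-- The reference killed diffusion with coefficients `b, σ`, in its own filtration. -/
def RefDiffusion {Ω : Type*} {m0 : MeasurableSpace Ω} (P : Measure Ω) (E : Set ℝ)
    (b σ : ℝ → ℝ → ℝ) (Z : ℝ → Ω → ℝ) (s₀ : ℝ) : Prop :=
  SolvesKilledSDE P (natFilt Z) E (fun u ω => b u (Z u ω)) (fun u ω => σ u (Z u ω)) Z s₀

/-- first/second coordinate partial derivatives on `ℝ × ℝ`. -/
def pd1 (f : ℝ × ℝ → ℝ) (x : ℝ × ℝ) : ℝ := fderiv ℝ f x (1, 0)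
def pd2 (f : ℝ × ℝ → ℝ) (x : ℝ × ℝ) : ℝ := fderiv ℝ f x (0, 1)

/-- Weak (martingale-problem) formulation of the two-dimensional killed SDE with
coordinatewise (possibly random) drifts `β1, β2` and diffusions `ς1, ς2`. -/
def SolvesKilledSDE2 {Ω : Type*} {m0 : MeasurableSpace Ω} (P : Measure Ω)
    (𝓖 : ℝ → MeasurableSpace Ω) (E : Set ℝ) (β1 β2 ς1 ς2 : ℝ → Ω → ℝ)
    (X : ℝ → Ω → ℝ × ℝ) : Prop :=
  (∀ t : ℝ, Measurable[𝓖 t] (X t)) ∧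
  (∀ᵐ ω ∂P, Continuous fun t => X t ω) ∧
  (∀ᵐ ω ∂P, ∀ t, 0 ≤ t →
      ((X t ω).1 ∉ E → ∀ u, t ≤ u → (X u ω).1 = (X t ω).1) ∧
      ((X t ω).2 ∉ E → ∀ u, t ≤ u → (X u ω).2 = (X t ω).2)) ∧
  ∀ f : ℝ × ℝ → ℝ, ContDiff ℝ 2 f → HasCompactSupport f →
    MartingaleWRT P 𝓖 (fun t ω =>
      f (X (clamp t) ω) -
        ∫ u in (0:ℝ)..clamp t,
          (Set.indicator E
              (fun _ => β1 u ω * pd1 f (X u ω) + ς1 u ω ^ 2 / 2 * pd1 (pd1 f) (X u ω))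
              ((X u ω).1)
           + Set.indicator E
              (fun _ => β2 u ω * pd2 f (X u ω) + ς2 u ω ^ 2 / 2 * pd2 (pd2 f) (X u ω))
              ((X u ω).2)))

/-- Relative entropy `H(P|R)` (with value `∞` if `P` is not absolutely continuous
with respect to `R` or the log-likelihood ratio is not integrable). -/

def relEnt {Ω : Type*} [MeasurableSpace Ω] (P R : Measure Ω) : ℝ≥0∞ :=
  if P ≪ R ∧ Integrable (llr P R) P then ENNReal.ofReal (∫ ω, llr P R ω ∂P) else ⊤

/-- The law of a process, as a measure on the product path space. -/
def pathLaw {Ω E' : Type*} [MeasurableSpace Ω] [MeasurableSpace E'] (P : Measure Ω)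
    (X : ℝ → Ω → E') : Measure (ℝ → E') := P.map (fun ω t => X t ω)

/-- Time-`t` marginal of a path measure. -/
def tmarg {E' : Type*} [MeasurableSpace E'] (Q : Measure (ℝ → E')) (t : ℝ) : Measure E' :=
  Q.map (fun w => w t)

/-- `C^{1,2}` regularity of `f : (t, z) ↦ f t z` on `T × S`. -/
def C12On (f : ℝ → ℝ → ℝ) (T S : Set ℝ) : Prop :=
  ContinuousOn (fun p : ℝ × ℝ => f p.1 p.2) (T ×ˢ S) ∧
  (∃ ft : ℝ → ℝ → ℝ, ContinuousOn (fun p : ℝ × ℝ => ft p.1 p.2) (T ×ˢ S) ∧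
    ∀ t ∈ T, ∀ x ∈ S, HasDerivAt (fun s => f s x) (ft t x) t) ∧
  (∃ fz fzz : ℝ → ℝ → ℝ,
    ContinuousOn (fun p : ℝ × ℝ => fz p.1 p.2) (T ×ˢ S) ∧
    ContinuousOn (fun p : ℝ × ℝ => fzz p.1 p.2) (T ×ˢ S) ∧
    (∀ t ∈ T, ∀ x ∈ S, HasDerivAt (f t) (fz t x) x ∧ HasDerivAt (fz t) (fzz t x) x))

/-- `C^{1,2}` regularity of `f : (t, x) ↦ f t x`, `x ∈ ℝ²`, on `T × S`. -/
def C12On2 (f : ℝ → ℝ × ℝ → ℝ) (T : Set ℝ) (S : Set (ℝ × ℝ)) : Prop :=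
  ContinuousOn (fun p : ℝ × (ℝ × ℝ) => f p.1 p.2) (T ×ˢ S) ∧
  (∃ ft : ℝ → ℝ × ℝ → ℝ, ContinuousOn (fun p : ℝ × (ℝ × ℝ) => ft p.1 p.2) (T ×ˢ S) ∧
    ∀ t ∈ T, ∀ x ∈ S, HasDerivAt (fun s => f s x) (ft t x) t) ∧
  ∀ t ∈ T, ContDiffOn ℝ 2 (f t) S

/-- `q, L` form the transition density / killing probability pair of the reference
killed diffusion with coefficients `b, σ`, state space `E`. -/
def IsTransDensity (E : Set ℝ) (b σ : ℝ → ℝ → ℝ)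
    (q : ℝ → ℝ → ℝ → ℝ → ℝ) (L : ℝ → ℝ → ℝ → ℝ) : Prop :=
  ∀ s ∈ Ico (0:ℝ) 1, ∀ z ∈ E,
    ∃ (Ω : Type) (m0 : MeasurableSpace Ω) (P : Measure Ω) (Z : ℝ → Ω → ℝ),
      IsProbabilityMeasure P ∧ (∀ᵐ ω ∂P, Z s ω = z) ∧
      RefDiffusion P E b σ Z s ∧
      ∀ t ∈ Ioc s 1,
        (∀ A : Set ℝ, MeasurableSet A → A ⊆ E →
            P.map (Z t) A = ENNReal.ofReal (∫ y in A, q s t z y)) ∧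
        L s t z = 1 - ∫ y in E, q s t z y


/-- A `𝓖`-Brownian motion. -/
def IsBM {Ω : Type*} {m0 : MeasurableSpace Ω} (P : Measure Ω)
    (𝓖 : ℝ → MeasurableSpace Ω) (B : ℝ → Ω → ℝ) : Prop :=
  (∀ t : ℝ, Measurable[𝓖 t] (B t)) ∧ (∀ᵐ ω ∂P, B 0 ω = 0) ∧
  (∀ᵐ ω ∂P, Continuous fun t => B t ω) ∧
  ∀ s t : ℝ, 0 ≤ s → s ≤ t →
    P.map (fun ω => B t ω - B s ω) = gaussianReal 0 (Real.toNNReal (t - s)) ∧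
    ∀ A : Set Ω, MeasurableSet[𝓖 s] A → ∀ C : Set ℝ, MeasurableSet C →
      P (A ∩ (fun ω => B t ω - B s ω) ⁻¹' C) = P A * P.map (fun ω => B t ω - B s ω) C

/-- The joint law on path space of two independent copies of a process with law `lawZ`. -/
def jointLaw (lawZ : Measure (ℝ → ℝ)) : Measure (ℝ → ℝ × ℝ) :=
  (lawZ.prod lawZ).map (fun p t => (p.1 t, p.2 t))

/-- Admissibility for the Schrödinger problem: probability with prescribed
initial and terminal one-dimensional marginals. -/
def SchAdm (μ₀ μ₁ : Measure (ℝ × ℝ)) (Q : Measure (ℝ → ℝ × ℝ)) : Prop :=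
  IsProbabilityMeasure Q ∧ tmarg Q 0 = μ₀ ∧ tmarg Q 1 = μ₁

/-- The `h`-function `h(t,(z,y)) = E^R[f(X¹₁, X²₁) | (X¹_t, X²_t) = (z,y)]`, written out
by means of the transition density `q` and killing probability `L` (absorption point `l`). -/
def hfun (E : Set ℝ) (l : ℝ) (q : ℝ → ℝ → ℝ → ℝ → ℝ) (L : ℝ → ℝ → ℝ → ℝ)
    (f : ℝ × ℝ → ℝ) (t : ℝ) (x : ℝ × ℝ) : ℝ :=
  (∫ z' in E, ∫ y' in E, f (z', y') * q t 1 x.1 z' * q t 1 x.2 y') +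
  (∫ z' in E, f (z', l) * q t 1 x.1 z') * L t 1 x.2 +
  L t 1 x.1 * (∫ y' in E, f (l, y') * q t 1 x.2 y') +
  f (l, l) * L t 1 x.1 * L t 1 x.2

/-- The function `ρ(t,y;z) = ∫_E f(z,u) q(t,1;y,u) du + f(z,ℓ) L(t,1;y)`. -/
def ρfun (E : Set ℝ) (l : ℝ) (q : ℝ → ℝ → ℝ → ℝ → ℝ) (L : ℝ → ℝ → ℝ → ℝ)
    (f : ℝ × ℝ → ℝ) (t y z : ℝ) : ℝ :=
  (∫ u in E, f (z, u) * q t 1 y u) + f (z, l) * L t 1 y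

/-- First marginal density `f₁(z) = ∫ f(z,y) η(dy)`. -/
def fmarg1 (f : ℝ × ℝ → ℝ) (η : Measure ℝ) (z : ℝ) : ℝ := ∫ y, f (z, y) ∂η

/-- Second marginal density `f₂(y) = ∫ f(z,y) η(dz)`. -/
def fmarg2 (f : ℝ × ℝ → ℝ) (η : Measure ℝ) (y : ℝ) : ℝ := ∫ z, f (z, y) ∂η

/-- Normalized `ρ`: `ρ(t,y,z) = ∫_E (f(z,u)/f₁(z)) q(t,1;y,u) du + (f(z,ℓ)/f₁(z)) L(t,1;y)`. -/
def ρnorm (E : Set ℝ) (l : ℝ) (q : ℝ → ℝ → ℝ → ℝ → ℝ) (L : ℝ → ℝ → ℝ → ℝ)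
    (f : ℝ × ℝ → ℝ) (η : Measure ℝ) (t y z : ℝ) : ℝ :=
  (∫ u in E, (f (z, u) / fmarg1 f η z) * q t 1 y u) + (f (z, l) / fmarg1 f η z) * L t 1 y

/-- `π¹(t,y) = ∫ ρ(t,y,w) f₁(w) η(dw)`. -/
def π1fun (E : Set ℝ) (l : ℝ) (q : ℝ → ℝ → ℝ → ℝ → ℝ) (L : ℝ → ℝ → ℝ → ℝ)
    (f : ℝ × ℝ → ℝ) (η : Measure ℝ) (t y : ℝ) : ℝ :=
  ∫ w, ρnorm E l q L f η t y w * fmarg1 f η w ∂η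

/-- The drift of the reference diffusion conditioned on its terminal value `Z1`. -/
def condDrift {Ω : Type*} (E : Set ℝ) (b σ : ℝ → ℝ → ℝ) (q : ℝ → ℝ → ℝ → ℝ → ℝ)
    (L : ℝ → ℝ → ℝ → ℝ) (Z : ℝ → Ω → ℝ) (Z1 : Ω → ℝ) : ℝ → Ω → ℝ :=
  fun u ω => b u (Z u ω) + σ u (Z u ω) ^ 2 *
    (if Z1 ω ∈ E then deriv (fun z => q u 1 z (Z1 ω)) (Z u ω) / q u 1 (Z u ω) (Z1 ω)
     else deriv (fun z => L u 1 z) (Z u ω) / L u 1 (Z u ω))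

/-- A controlled pair `(X¹, X²) = (Z, Y)` as in the constrained Schrödinger problem:
`Z` is the reference diffusion conditioned on its terminal value (known at time `0`,
initial enlargement), and `Y` has controlled drift `b + α` with square-integrable control. -/
def IsControlledPair {Ω : Type*} {m0 : MeasurableSpace Ω} (P : Measure Ω)
    (𝓖 : ℝ → MeasurableSpace Ω) (E : Set ℝ) (b σ : ℝ → ℝ → ℝ)
    (q : ℝ → ℝ → ℝ → ℝ → ℝ) (L : ℝ → ℝ → ℝ → ℝ)
    (Z Y : ℝ → Ω → ℝ) (α : ℝ → Ω → ℝ) (z₀ : ℝ) : Prop :=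
  IsProbabilityMeasure P ∧
  (∀ t : ℝ, Measurable[𝓖 t] (Z t) ∧ Measurable[𝓖 t] (Y t) ∧ Measurable[𝓖 t] (α t)) ∧
  Measurable[𝓖 0] (Z 1) ∧
  (∀ᵐ ω ∂P, Z 0 ω = z₀ ∧ Y 0 ω = z₀) ∧
  SolvesKilledSDE P 𝓖 E (condDrift E b σ q L Z (Z 1)) (fun u ω => σ u (Z u ω)) Z 0 ∧
  SolvesKilledSDE P 𝓖 E (fun u ω => b u (Y u ω) + α u ω) (fun u ω => σ u (Y u ω)) Y 0 ∧
  Integrable (fun ω => ∫ u in (0:ℝ)..1,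
      Set.indicator E (fun _ => α u ω ^ 2 / σ u (Y u ω) ^ 2) (Y u ω)) P

/-- The set `P̄(μ₁)` of laws of admissible controlled pairs with terminal joint law `μ₁`. -/
def ConstrainedClass (E : Set ℝ) (b σ : ℝ → ℝ → ℝ)
    (q : ℝ → ℝ → ℝ → ℝ → ℝ) (L : ℝ → ℝ → ℝ → ℝ) (z₀ : ℝ)
    (μ₁ : Measure (ℝ × ℝ)) : Set (Measure (ℝ → ℝ × ℝ)) :=
  {Q | ∃ (Ω : Type) (m0 : MeasurableSpace Ω) (P : Measure Ω)
        (𝓖 : ℝ → MeasurableSpace Ω) (Z Y : ℝ → Ω → ℝ) (α : ℝ → Ω → ℝ),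
      IsControlledPair P 𝓖 E b σ q L Z Y α z₀ ∧
      Q = pathLaw P (fun t ω => (Z t ω, Y t ω)) ∧
      P.map (fun ω => (Z 1 ω, Y 1 ω)) = μ₁}

/-- The coupled system of Section 5: `Z` the reference diffusion conditioned on the
terminal value `Z1` (a time-`0` measurable randomization with law `f₁ dη`), and `Y`
the `ρ`-h-transform given `Z1`. -/
def CoupledSystem {Ω : Type*} {m0 : MeasurableSpace Ω} (P : Measure Ω)
    (𝓖 : ℝ → MeasurableSpace Ω) (E : Set ℝ) (l : ℝ) (b σ : ℝ → ℝ → ℝ)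
    (q : ℝ → ℝ → ℝ → ℝ → ℝ) (L : ℝ → ℝ → ℝ → ℝ) (f : ℝ × ℝ → ℝ) (η : Measure ℝ)
    (z₀ : ℝ) (Z1 : Ω → ℝ) (Z Y : ℝ → Ω → ℝ) : Prop :=
  IsProbabilityMeasure P ∧ Measurable[𝓖 0] Z1 ∧
  P.map Z1 = η.withDensity (fun z => ENNReal.ofReal (fmarg1 f η z)) ∧
  (∀ᵐ ω ∂P, Z 0 ω = z₀ ∧ Y 0 ω = z₀) ∧
  SolvesKilledSDE P 𝓖 E (condDrift E b σ q L Z Z1) (fun u ω => σ u (Z u ω)) Z 0 ∧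
  SolvesKilledSDE P 𝓖 E
    (fun u ω => b u (Y u ω) + σ u (Y u ω) ^ 2 *
        deriv (fun y => ρnorm E l q L f η u y (Z1 ω)) (Y u ω) /
        ρnorm E l q L f η u (Y u ω) (Z1 ω))
    (fun u ω => σ u (Y u ω)) Y 0

/-!
By Dynkin's formula the expectation of `f u (Z u)` decreases in `u` along the killed diffusion as
soon as `∂ₜ f + L f ≤ 0`, where the generator `L` vanishes off `E`. Such an `f` is obtained by
perturbing a Gaussian kernel: `f u x = exp (h τ - a τ * D x)` with `τ = t + δ - u` and `D` a
truncated squared distance from `y`, scaled by `σ t y`. Taking the rate `a τ` slightly below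
`1 / (2 τ)` leaves room for the errors of order a power of `τ` that the Hölder and Lipschitz
coefficients cause, and off `E`, where `D` is bounded below, the condition holds for small `τ`.
For `δ = ρ ^ 2` the kernel at time `t` is at least of order `1 / ρ` on the ball of radius `ρ`
around `y`, while at time `s` it is small at every `z` with `|y - z| ≥ r`. Hence
`P (|Z t - y| ≤ ρ) ≤ M * √(t - s + ρ ^ 2) * ρ` for the diffusion started at `(s, z)`, and dividing
by `ρ → 0` gives `q s t z y ≤ M * √(t - s)`. This is (i), and (ii) follows because `q 0 (t - s) x`
has integral at most one. The density `q` is nonnegative because the diffusion survives in `E`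
with positive probability, which a subsolution supported in `E` shows in the same way.
-/

theorem continuousOn_of_lipschitz_of_holder {g : ℝ → ℝ → ℝ} {T S : Set ℝ} {K K' γ : ℝ}
    (hγ : 0 < γ) (hlip : ∀ t ∈ T, ∀ z ∈ S, ∀ z' ∈ S, |g t z - g t z'| ≤ K * |z - z'|)
    (hhol : ∀ z ∈ S, ∀ t ∈ T, ∀ t' ∈ T, |g t z - g t' z| ≤ K' * |t - t'| ^ γ) :
    ContinuousOn (fun p : ℝ × ℝ => g p.1 p.2) (T ×ˢ S) := by
  rintro ⟨t₀, z₀⟩ ⟨ht₀, hz₀⟩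
  have hcont : Continuous fun p : ℝ × ℝ => K * |p.2 - z₀| + K' * |p.1 - t₀| ^ γ := by
    have : Continuous fun p : ℝ × ℝ => |p.1 - t₀| ^ γ :=
      Continuous.rpow_const (by fun_prop) fun _ => Or.inr hγ.le
    fun_prop
  have hlim : Tendsto (fun p : ℝ × ℝ => K * |p.2 - z₀| + K' * |p.1 - t₀| ^ γ)
      (𝓝[T ×ˢ S] (t₀, z₀)) (𝓝 0) := by
    simpa [Real.zero_rpow hγ.ne'] using (hcont.tendsto (t₀, z₀)).mono_left nhdsWithin_le_nhds
  refine tendsto_iff_dist_tendsto_zero.2 (squeeze_zero' (Eventually.of_forall fun _ => dist_nonneg)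
    ?_ hlim)
  filter_upwards [self_mem_nhdsWithin] with p hp
  exact (dist_triangle _ (g p.1 z₀) _).trans
    (add_le_add (hlip p.1 hp.1 p.2 hp.2 z₀ hz₀) (hhol z₀ hz₀ p.1 hp.1 t₀ ht₀))

/-- The generator of the killed diffusion at time `u`, applied to `f`. It vanishes off `E`, where
the diffusion is absorbed. -/
def killedGenerator (E : Set ℝ) (b σ : ℝ → ℝ → ℝ) (u : ℝ) (f : ℝ → ℝ) : ℝ → ℝ :=
  E.indicator fun x => b u x * deriv f x + σ u x ^ 2 / 2 * deriv (deriv f) x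

theorem killedGenerator_of_mem {E : Set ℝ} {b σ : ℝ → ℝ → ℝ} {u x : ℝ} {f : ℝ → ℝ} (hx : x ∈ E) :
    killedGenerator E b σ u f x = b u x * deriv f x + σ u x ^ 2 / 2 * deriv (deriv f) x :=
  indicator_of_mem hx _

theorem killedGenerator_of_notMem {E : Set ℝ} {b σ : ℝ → ℝ → ℝ} {u x : ℝ} {f : ℝ → ℝ}
    (hx : x ∉ E) : killedGenerator E b σ u f x = 0 :=
  indicator_of_notMem hx _

theorem killedGenerator_sub_const (E : Set ℝ) (b σ : ℝ → ℝ → ℝ) (u : ℝ) (f : ℝ → ℝ) (a : ℝ) :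
    killedGenerator E b σ u (fun x => f x - a) = killedGenerator E b σ u f := by
  have hderiv : deriv (fun x => f x - a) = deriv f := funext fun _ => deriv_sub_const a
  rw [killedGenerator, hderiv, killedGenerator]

theorem killedGenerator_const_mul (E : Set ℝ) (b σ : ℝ → ℝ → ℝ) (u a : ℝ) (f : ℝ → ℝ) (x : ℝ) :
    killedGenerator E b σ u (fun x => a * f x) x = a * killedGenerator E b σ u f x := by
  by_cases hx : x ∈ E
  · have hderiv : deriv (fun x => a * f x) = fun x => a * deriv f x :=
      funext fun _ => deriv_const_mul_field a
    rw [killedGenerator_of_mem hx, killedGenerator_of_mem hx, hderiv, deriv_const_mul_field]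
    ring
  · rw [killedGenerator_of_notMem hx, killedGenerator_of_notMem hx, mul_zero]

namespace A1

variable {E : Set ℝ} {b σ : ℝ → ℝ → ℝ}

theorem continuousOn_drift (hA : A1 E b σ) :
    ContinuousOn (fun p : ℝ × ℝ => b p.1 p.2) (Icc 0 1 ×ˢ E) := by
  obtain ⟨K, hK⟩ := hA.lipschitz
  obtain ⟨K', γ, hγ, hK'⟩ := hA.holder
  exact continuousOn_of_lipschitz_of_holder hγ
    (fun t ht z hz z' hz' => (hK t ht z hz z' hz').1)
    (fun z hz t ht t' ht' => (hK' z hz t ht t' ht').1)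

theorem continuousOn_diffusion (hA : A1 E b σ) :
    ContinuousOn (fun p : ℝ × ℝ => σ p.1 p.2) (Icc 0 1 ×ˢ E) := by
  obtain ⟨K, hK⟩ := hA.lipschitz
  obtain ⟨K', γ, hγ, hK'⟩ := hA.holder
  exact continuousOn_of_lipschitz_of_holder hγ
    (fun t ht z hz z' hz' => (hK t ht z hz z' hz').2)
    (fun z hz t ht t' ht' => (hK' z hz t ht t' ht').2)

theorem continuousOn_killedGenerator (hA : A1 E b σ) {f : ℝ → ℝ} (hf : ContDiff ℝ 2 f) :
    ContinuousOn (fun p : ℝ × ℝ => killedGenerator E b σ p.1 f p.2) (Icc 0 1 ×ˢ E) := by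
  rw [← one_add_one_eq_two] at hf
  have hf' : ContDiff ℝ 1 (deriv f) := hf.deriv'
  have hderiv : Continuous fun p : ℝ × ℝ => deriv f p.2 := hf'.continuous.comp continuous_snd
  have hderiv₂ : Continuous fun p : ℝ × ℝ => deriv (deriv f) p.2 :=
    hf'.continuous_deriv_one.comp continuous_snd
  refine ContinuousOn.congr ?_ fun p hp => killedGenerator_of_mem hp.2
  exact (hA.continuousOn_drift.mul hderiv.continuousOn).add
    (((hA.continuousOn_diffusion.pow 2).div_const 2).mul hderiv₂.continuousOn)

theorem exists_bound_killedGenerator (hA : A1 E b σ) {f : ℝ → ℝ} (hf : ContDiff ℝ 2 f)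
    {K : Set ℝ} (hK : IsCompact K) :
    ∃ C, ∀ u ∈ Icc (0 : ℝ) 1, ∀ x ∈ K, |killedGenerator E b σ u f x| ≤ C := by
  rw [← one_add_one_eq_two] at hf
  have hf' : ContDiff ℝ 1 (deriv f) := hf.deriv'
  obtain ⟨C, hC⟩ := hA.bounded
  obtain ⟨C₁, hC₁⟩ := hK.exists_bound_of_continuousOn hf'.continuous.continuousOn
  obtain ⟨C₂, hC₂⟩ := hK.exists_bound_of_continuousOn hf'.continuous_deriv_one.continuousOn
  refine ⟨|C| * |C₁| + |C| ^ 2 / 2 * |C₂|, fun u hu x hx => ?_⟩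
  by_cases hxE : x ∈ E
  · obtain ⟨hb, hσ⟩ := hC u hu x hxE
    have hb' : |b u x| ≤ |C| := hb.trans (le_abs_self _)
    have hσ' : |σ u x| ≤ |C| := hσ.trans (le_abs_self _)
    have h₁ : |deriv f x| ≤ |C₁| := (hC₁ x hx).trans (le_abs_self _)
    have h₂ : |deriv (deriv f) x| ≤ |C₂| := (hC₂ x hx).trans (le_abs_self _)
    rw [killedGenerator_of_mem hxE]
    refine (abs_add_le _ _).trans ?_
    rw [abs_mul, abs_mul, abs_div, abs_pow, abs_two]
    gcongr
  · rw [killedGenerator_of_notMem hxE, abs_zero]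
    positivity

theorem intervalIntegrable_killedGenerator (hA : A1 E b σ) (hE : IsOpen E) {f : ℝ → ℝ}
    (hf : ContDiff ℝ 2 f) {X : ℝ → ℝ} (hX : Continuous X) {p q : ℝ} (hp : 0 ≤ p) (hpq : p ≤ q)
    (hq : q ≤ 1) :
    IntervalIntegrable (fun u => killedGenerator E b σ u f (X u)) volume p q := by
  obtain ⟨C, hC⟩ := hA.exists_bound_killedGenerator hf
    ((isCompact_Icc (a := p) (b := q)).image hX)
  have hIcc : Icc p q ⊆ Icc 0 1 := Icc_subset_Icc hp hq
  have hmeasE : MeasurableSet (X ⁻¹' E) := (hE.preimage hX).measurableSet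
  have hcont : ContinuousOn (fun u => killedGenerator E b σ u f (X u)) (X ⁻¹' E ∩ Icc p q) :=
    (hA.continuousOn_killedGenerator hf).comp (continuousOn_id.prodMk hX.continuousOn)
      fun u hu => ⟨hIcc hu.2, hu.1⟩
  have hind : (X ⁻¹' E).indicator (fun u => killedGenerator E b σ u f (X u)) =
      fun u => killedGenerator E b σ u f (X u) :=
    indicator_eq_self.2 fun u hu => by_contra fun h => hu (killedGenerator_of_notMem h)
  rw [intervalIntegrable_iff_integrableOn_Icc_of_le hpq, ← hind, IntegrableOn,
    integrable_indicator_iff hmeasE, IntegrableOn, Measure.restrict_restrict hmeasE]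
  refine IntegrableOn.of_bound ?_
    (hcont.aestronglyMeasurable (hmeasE.inter measurableSet_Icc)) C ?_
  · exact (measure_mono inter_subset_right).trans_lt measure_Icc_lt_top
  · exact (ae_restrict_iff' (hmeasE.inter measurableSet_Icc)).2 <|
      ae_of_all _ fun u hu => hC u (hIcc hu.2) _ ⟨u, hu.2, rfl⟩

end A1

theorem measurable_natFilt {Ω E' : Type*} [MeasurableSpace E'] (X : ℝ → Ω → E') (t : ℝ) :
    Measurable[natFilt X t] (X t) :=
  measurable_iff_comap_le.2 <|
    le_biSup (fun s => MeasurableSpace.comap (X s) inferInstance) self_mem_Iic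

theorem natFilt_mono {Ω E' : Type*} [MeasurableSpace E'] (X : ℝ → Ω → E') {s t : ℝ} (hst : s ≤ t) :
    natFilt X s ≤ natFilt X t :=
  biSup_mono fun _ hi => Iic_subset_Iic.2 hst hi

namespace RefDiffusion

variable {Ω : Type*} {m0 : MeasurableSpace Ω} {P : Measure Ω} [IsProbabilityMeasure P]
  {E : Set ℝ} {b σ : ℝ → ℝ → ℝ} {Z : ℝ → Ω → ℝ} {s z : ℝ}

-- Conditional expectation given a σ-algebra that is not contained in `m0` is `0` by convention, and
-- the martingale property would then force `f z = 0` for every test function `f`.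
theorem natFilt_le (hZ : RefDiffusion P E b σ Z s) (h0 : ∀ᵐ ω ∂P, Z s ω = z) (hs : s ≤ 1)
    (t : ℝ) : natFilt Z t ≤ m0 := by
  by_contra hnot
  have hnot' : ¬ natFilt Z (max t s) ≤ m0 :=
    fun hle => hnot ((natFilt_mono Z (le_max_left _ _)).trans hle)
  let f : ContDiffBump z := ⟨1, 2, one_pos, one_lt_two⟩
  obtain ⟨-, -, hmart⟩ := hZ.2.2.2 f f.contDiff f.hasCompactSupport
  have hzero := hmart (max t s) (max t s) le_rfl
  rw [condExp_of_not_le hnot'] at hzero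
  have hstart := (condExp_congr_ae (m := natFilt Z s) hzero.symm).symm.trans
    (hmart s (max t s) (le_max_right _ _))
  rw [condExp_zero] at hstart
  have hfalse : ∀ᵐ _ ∂P, False := by
    filter_upwards [hstart, h0] with ω hω hzω
    have hfz : f z = 1 := f.one_of_mem_closedBall (by simp [f])
    simp [min_eq_left hs, hzω, hfz] at hω
  simp [ae_iff] at hfalse

theorem measurable (hZ : RefDiffusion P E b σ Z s) (h0 : ∀ᵐ ω ∂P, Z s ω = z) (hs : s ≤ 1)
    (t : ℝ) : Measurable (Z t) :=
  (measurable_natFilt Z t).mono (hZ.natFilt_le h0 hs t) le_rfl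

theorem dynkin_formula (hZ : RefDiffusion P E b σ Z s) (h0 : ∀ᵐ ω ∂P, Z s ω = z)
    (hA : A1 E b σ) (hE : IsOpen E) (hs : 0 ≤ s) {p q : ℝ} (hsp : s ≤ p) (hpq : p ≤ q) (hq : q ≤ 1)
    {f : ℝ → ℝ} {a : ℝ} (hf : ContDiff ℝ 2 f) (hfa : HasCompactSupport fun x => f x - a) :
    Integrable (fun ω => ∫ u in p..q, killedGenerator E b σ u f (Z u ω)) P ∧
      ∫ ω, ∫ u in p..q, killedGenerator E b σ u f (Z u ω) ∂volume ∂P =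
        ∫ ω, (f (Z q ω) - f (Z p ω)) ∂P := by
  have hs1 : s ≤ 1 := hsp.trans (hpq.trans hq)
  obtain ⟨C, hC⟩ := hfa.exists_bound_of_continuous (hf.continuous.sub continuous_const)
  have hfint (t : ℝ) : Integrable (fun ω => f (Z t ω) - a) P :=
    .of_bound ((hf.continuous.measurable.comp
      (hZ.measurable h0 hs1 t)).sub_const a).aestronglyMeasurable C (ae_of_all _ fun ω => hC _)
  let M : ℝ → Ω → ℝ := fun t ω => f (Z t ω) - a - ∫ u in s..t, killedGenerator E b σ u f (Z u ω)
  have hM {t : ℝ} (hst : s ≤ t) (ht : t ≤ 1) : (fun ω => f (Z (max s (min t 1)) ω) - a -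
      ∫ u in s..(max s (min t 1)), E.indicator (fun x => b u (Z u ω) * deriv (fun x => f x - a) x +
        σ u (Z u ω) ^ 2 / 2 * deriv (deriv fun x => f x - a) x) (Z u ω)) = M t := by
    rw [min_eq_left ht, max_eq_right hst]
    funext ω
    simp only [M, ← killedGenerator_sub_const E b σ _ f a]
    rfl
  obtain ⟨-, hMint, hMart⟩ := hZ.2.2.2 (fun x => f x - a) (hf.sub contDiff_const) hfa
  have hMp : Integrable (M p) P := hM hsp (hpq.trans hq) ▸ hMint p
  have hMq : Integrable (M q) P := hM (hsp.trans hpq) hq ▸ hMint q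
  have hmean : ∫ ω, M q ω ∂P = ∫ ω, M p ω ∂P := by
    have hcond := integral_congr_ae (hMart p q hpq)
    rwa [integral_condExp (hZ.natFilt_le h0 hs1 p), hM hsp (hpq.trans hq),
      hM (hsp.trans hpq) hq] at hcond
  have hcomp : (fun ω => f (Z q ω) - f (Z p ω) - (M q ω - M p ω)) =ᵐ[P]
      fun ω => ∫ u in p..q, killedGenerator E b σ u f (Z u ω) := by
    filter_upwards [hZ.2.1] with ω hω
    have hadd := intervalIntegral.integral_add_adjacent_intervals
      (hA.intervalIntegrable_killedGenerator hE hf hω hs hsp (hpq.trans hq))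
      (hA.intervalIntegrable_killedGenerator hE hf hω (hs.trans hsp) hpq hq)
    linarith [hadd]
  have hincr : Integrable (fun ω => f (Z q ω) - f (Z p ω)) P := by
    simpa [Pi.sub_def] using (hfint q).sub (hfint p)
  have hMincr : Integrable (fun ω => M q ω - M p ω) P := hMq.sub hMp
  refine ⟨(hincr.sub hMincr).congr hcomp, ?_⟩
  rw [← integral_congr_ae hcomp, integral_sub hincr hMincr, integral_sub hMq hMp, hmean, sub_self,
    sub_zero]

end RefDiffusion

/-- Space-time test functions on `[c₁, c₂] × ℝ` with time derivative `f'`: twice continuously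
differentiable in space and constant far away, with `f` and `f'` bounded and jointly continuous. -/
structure IsTestFunction (f f' : ℝ → ℝ → ℝ) (c₁ c₂ : ℝ) : Prop where
  contDiff : ∀ c ∈ Icc c₁ c₂, ContDiff ℝ 2 (f c)
  hasCompactSupport_sub_const : ∀ c ∈ Icc c₁ c₂, ∃ a, HasCompactSupport fun x => f c x - a
  hasDerivAt : ∀ c ∈ Icc c₁ c₂, ∀ x, HasDerivAt (fun c => f c x) (f' c x) c
  continuousOn : ContinuousOn (fun p : ℝ × ℝ => f p.1 p.2) (Icc c₁ c₂ ×ˢ univ)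
  continuousOn_deriv : ContinuousOn (fun p : ℝ × ℝ => f' p.1 p.2) (Icc c₁ c₂ ×ˢ univ)
  bounded : ∃ C, ∀ c ∈ Icc c₁ c₂, ∀ x, |f c x| ≤ C
  bounded_deriv : ∃ C, ∀ c ∈ Icc c₁ c₂, ∀ x, |f' c x| ≤ C

theorem exists_bound_of_hasCompactSupport_sub_const {D : ℝ → ℝ} {d : ℝ} (hD : Continuous D)
    (hd : HasCompactSupport fun x => D x - d) : ∃ K, ∀ x, D x ∈ Metric.closedBall 0 K := by
  obtain ⟨K, hK⟩ := hd.exists_bound_of_continuous (hD.sub continuous_const)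
  refine ⟨K + |d|, fun x => ?_⟩
  simpa using (norm_add_le (D x - d) d).trans (add_le_add_left (hK x) _)

theorem exists_bound_comp {F : ℝ → ℝ → ℝ} {D : ℝ → ℝ} {d c₁ c₂ : ℝ}
    (hF : ContinuousOn (fun p : ℝ × ℝ => F p.1 p.2) (Icc c₁ c₂ ×ˢ univ)) (hD : Continuous D)
    (hd : HasCompactSupport fun x => D x - d) :
    ∃ C, ∀ c ∈ Icc c₁ c₂, ∀ x, |F c (D x)| ≤ C := by
  obtain ⟨K, hK⟩ := exists_bound_of_hasCompactSupport_sub_const hD hd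
  obtain ⟨C, hC⟩ := (isCompact_Icc.prod
    (isCompact_closedBall (0 : ℝ) K)).exists_bound_of_continuousOn
      (hF.mono (prod_mono_right (subset_univ _)))
  exact ⟨C, fun c hc x => hC (c, D x) ⟨hc, hK x⟩⟩

theorem IsTestFunction.of_comp {F F' : ℝ → ℝ → ℝ} {D : ℝ → ℝ} {d c₁ c₂ : ℝ}
    (hF : ∀ c ∈ Icc c₁ c₂, ContDiff ℝ 2 (F c))
    (hF' : ∀ c ∈ Icc c₁ c₂, ∀ x, HasDerivAt (fun c => F c x) (F' c x) c)
    (hcont : ContinuousOn (fun p : ℝ × ℝ => F p.1 p.2) (Icc c₁ c₂ ×ˢ univ))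
    (hcont' : ContinuousOn (fun p : ℝ × ℝ => F' p.1 p.2) (Icc c₁ c₂ ×ˢ univ))
    (hD : ContDiff ℝ 2 D) (hd : HasCompactSupport fun x => D x - d) :
    IsTestFunction (fun c x => F c (D x)) (fun c x => F' c (D x)) c₁ c₂ where
  contDiff c hc := (hF c hc).comp hD
  hasCompactSupport_sub_const c _ := ⟨F c d, hd.mono fun x hx hDx => hx (by
    simp only [sub_eq_zero.1 hDx, sub_self])⟩
  hasDerivAt c hc x := hF' c hc (D x)
  continuousOn := hcont.comp (f := fun p : ℝ × ℝ => (p.1, D p.2))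
    (continuous_fst.prodMk (hD.continuous.comp continuous_snd)).continuousOn
    fun p hp => ⟨hp.1, mem_univ _⟩
  continuousOn_deriv := hcont'.comp (f := fun p : ℝ × ℝ => (p.1, D p.2))
    (continuous_fst.prodMk (hD.continuous.comp continuous_snd)).continuousOn
    fun p hp => ⟨hp.1, mem_univ _⟩
  bounded := exists_bound_comp hcont hD.continuous hd
  bounded_deriv := exists_bound_comp hcont' hD.continuous hd

/-- `f` is a supersolution of the backward equation on `[c₁, c₂]`, for every generator frozen at a
later time. -/
def IsBackwardSupersolution (E : Set ℝ) (b σ f f' : ℝ → ℝ → ℝ) (c₁ c₂ : ℝ) : Prop :=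
  ∀ p ∈ Icc c₁ c₂, ∀ u ∈ Icc p c₂, ∀ x, f' p x + killedGenerator E b σ u (f p) x ≤ 0

/-- The increment of `f` along the path `X` from time `p` to time `q`, with the spatial part
replaced by its compensator. -/
def compensatedIncrement (E : Set ℝ) (b σ f : ℝ → ℝ → ℝ) (X : ℝ → ℝ) (p q : ℝ) : ℝ :=
  f q (X q) - f p (X q) + ∫ u in p..q, killedGenerator E b σ u (f p) (X u)

section MaximumPrinciple

variable {E : Set ℝ} {b σ f f' : ℝ → ℝ → ℝ} {c₁ c₂ : ℝ}

theorem IsBackwardSupersolution.compensatedIncrement_le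
    (hsuper : IsBackwardSupersolution E b σ f f' c₁ c₂) (hf : IsTestFunction f f' c₁ c₂)
    (hA : A1 E b σ) (hE : IsOpen E) (h0 : 0 ≤ c₁) (h1 : c₂ ≤ 1) {X : ℝ → ℝ} (hX : Continuous X)
    {p q B B' : ℝ} (hp : p ∈ Icc c₁ c₂) (hpq : p < q) (hq : q ≤ c₂)
    (hB : ∀ c ∈ Icc p q, f' c (X q) ≤ B) (hB' : ∀ u ∈ Icc p q, -f' p (X u) ≤ B') :
    compensatedIncrement E b σ f X p q ≤ (B + B') * (q - p) := by
  have hsub {c : ℝ} (hc : c ∈ Icc p q) : c ∈ Icc c₁ c₂ := ⟨hp.1.trans hc.1, hc.2.trans hq⟩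
  obtain ⟨c, hc, hslope⟩ := exists_hasDerivAt_eq_slope (f · (X q)) (f' · (X q)) hpq
    (fun c hc => (hf.hasDerivAt c (hsub hc) _).continuousAt.continuousWithinAt)
    fun c hc => hf.hasDerivAt c (hsub (Ioo_subset_Icc_self hc)) _
  have htime : f q (X q) - f p (X q) ≤ B * (q - p) := by
    rw [← div_le_iff₀ (sub_pos.2 hpq), ← hslope]
    exact hB c (Ioo_subset_Icc_self hc)
  have hspace : ∫ u in p..q, killedGenerator E b σ u (f p) (X u) ≤ ∫ _ in p..q, B' :=
    intervalIntegral.integral_mono_on hpq.le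
      (hA.intervalIntegrable_killedGenerator hE (hf.contDiff p hp) hX (h0.trans hp.1) hpq.le
        (hq.trans h1)) intervalIntegrable_const
      fun u hu => by linarith [hsuper p hp u ⟨hu.1, hu.2.trans hq⟩ (X u), hB' u hu]
  rw [intervalIntegral.integral_const, smul_eq_mul] at hspace
  rw [compensatedIncrement]
  linarith

theorem IsBackwardSupersolution.exists_bound_compensatedIncrement_div
    (hsuper : IsBackwardSupersolution E b σ f f' c₁ c₂) (hf : IsTestFunction f f' c₁ c₂)
    (hA : A1 E b σ) (hE : IsOpen E) (h0 : 0 ≤ c₁) (h1 : c₂ ≤ 1) :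
    ∃ C, ∀ X : ℝ → ℝ, Continuous X → ∀ p ∈ Icc c₁ c₂, ∀ q ∈ Ioc p c₂,
      |max (compensatedIncrement E b σ f X p q / (q - p)) 0| ≤ C := by
  obtain ⟨C, hC⟩ := hf.bounded_deriv
  refine ⟨|C| + |C|, fun X hX p hp q hq => ?_⟩
  have hC' {c : ℝ} (hc : c ∈ Icc c₁ c₂) (x : ℝ) : |f' c x| ≤ |C| :=
    (hC c hc x).trans (le_abs_self _)
  rw [abs_of_nonneg (le_max_right _ _)]
  refine max_le ((div_le_iff₀ (sub_pos.2 hq.1)).2 ?_) (by positivity)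
  exact hsuper.compensatedIncrement_le hf hA hE h0 h1 hX hp hq.1 hq.2
    (fun c hc => (le_abs_self _).trans (hC' ⟨hp.1.trans hc.1, hc.2.trans hq.2⟩ _))
    fun u _ => (neg_le_abs _).trans (hC' hp _)

theorem IsBackwardSupersolution.tendsto_compensatedIncrement_div
    (hsuper : IsBackwardSupersolution E b σ f f' c₁ c₂) (hf : IsTestFunction f f' c₁ c₂)
    (hA : A1 E b σ) (hE : IsOpen E) (h0 : 0 ≤ c₁) (h1 : c₂ ≤ 1) {X : ℝ → ℝ} (hX : Continuous X)
    {p : ℝ} (hp : p ∈ Ico c₁ c₂) :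
    Tendsto (fun q => max (compensatedIncrement E b σ f X p q / (q - p)) 0) (𝓝[>] p) (𝓝 0) := by
  refine Metric.tendsto_nhds.2 fun ε hε => ?_
  have hcont : ContinuousWithinAt (fun a : ℝ × ℝ => f' a.1 (X a.2)) (Icc c₁ c₂ ×ˢ univ) (p, p) :=
    hf.continuousOn_deriv.comp (f := fun a : ℝ × ℝ => (a.1, X a.2))
      (continuous_fst.prodMk (hX.comp continuous_snd)).continuousOn
      (fun a ha => ⟨ha.1, mem_univ _⟩) (p, p) ⟨Ico_subset_Icc_self hp, mem_univ _⟩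
  obtain ⟨δ, hδ, hclose⟩ := Metric.continuousWithinAt_iff.1 hcont (ε / 4) (by positivity)
  filter_upwards [Ioc_mem_nhdsGT hp.2, Ioo_mem_nhdsGT (lt_add_of_pos_right p hδ)] with q hq hqδ
  have hnear {c u : ℝ} (hc : c ∈ Icc p q) (hu : u ∈ Icc p q) :
      |f' c (X u) - f' p (X p)| < ε / 4 := by
    refine hclose (x := (c, u)) ⟨⟨hp.1.trans hc.1, hc.2.trans hq.2⟩, mem_univ _⟩ ?_
    rw [Prod.dist_eq, max_lt_iff, Real.dist_eq, Real.dist_eq, abs_of_nonneg (sub_nonneg.2 hc.1),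
      abs_of_nonneg (sub_nonneg.2 hu.1)]
    constructor <;> linarith [hc.2, hu.2, hqδ.2]
  have hle := hsuper.compensatedIncrement_le hf hA hE h0 h1 hX (Ico_subset_Icc_self hp) hq.1 hq.2
    (B := f' p (X p) + ε / 4) (B' := -f' p (X p) + ε / 4)
    (fun c hc => by linarith [abs_lt.1 (hnear hc (right_mem_Icc.2 hq.1.le))])
    (fun u hu => by linarith [abs_lt.1 (hnear (left_mem_Icc.2 hq.1.le) hu)])
  rw [Real.dist_0_eq_abs, abs_of_nonneg (le_max_right _ _)]
  refine max_lt ((div_lt_iff₀ (sub_pos.2 hq.1)).2 (hle.trans_lt ?_)) hε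
  exact mul_lt_mul_of_pos_right (by linarith) (sub_pos.2 hq.1)

end MaximumPrinciple

namespace RefDiffusion

variable {Ω : Type*} {m0 : MeasurableSpace Ω} {P : Measure Ω} [IsProbabilityMeasure P]
  {E : Set ℝ} {b σ f f' : ℝ → ℝ → ℝ} {Z : ℝ → Ω → ℝ} {s z c₁ c₂ : ℝ}

theorem integrable_comp (hZ : RefDiffusion P E b σ Z s) (h0 : ∀ᵐ ω ∂P, Z s ω = z) (hs : s ≤ 1)
    {g : ℝ → ℝ} (hg : Continuous g) {C : ℝ} (hC : ∀ x, |g x| ≤ C) (t : ℝ) :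
    Integrable (fun ω => g (Z t ω)) P :=
  .of_bound (hg.measurable.comp (hZ.measurable h0 hs t)).aestronglyMeasurable C
    (ae_of_all _ fun _ => hC _)

theorem continuousOn_integral (hZ : RefDiffusion P E b σ Z s) (h0 : ∀ᵐ ω ∂P, Z s ω = z)
    (hs : s ≤ 1) (hf : IsTestFunction f f' c₁ c₂) :
    ContinuousOn (fun c => ∫ ω, f c (Z c ω) ∂P) (Icc c₁ c₂) := by
  obtain ⟨C, hC⟩ := hf.bounded
  refine continuousOn_of_dominated (bound := fun _ => C) (fun c hc => ?_)
    (fun c hc => ae_of_all _ fun ω => hC c hc _) (integrable_const _) ?_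
  · exact (hZ.integrable_comp h0 hs (hf.contDiff c hc).continuous (hC c hc) c).aestronglyMeasurable
  · filter_upwards [hZ.2.1] with ω hω
    exact hf.continuousOn.comp (f := fun c => (c, Z c ω)) (continuous_id.prodMk hω).continuousOn
      fun c hc => ⟨hc, mem_univ _⟩

theorem integral_sub_integral (hZ : RefDiffusion P E b σ Z s) (h0 : ∀ᵐ ω ∂P, Z s ω = z)
    (hA : A1 E b σ) (hE : IsOpen E) (hs : 0 ≤ s) (hf : IsTestFunction f f' c₁ c₂) (hsc : s ≤ c₁)
    (hc : c₂ ≤ 1) {p q : ℝ} (hp : p ∈ Icc c₁ c₂) (hpq : p ≤ q) (hq : q ≤ c₂) :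
    Integrable (fun ω => compensatedIncrement E b σ f (Z · ω) p q) P ∧
      ∫ ω, compensatedIncrement E b σ f (Z · ω) p q ∂P =
        ∫ ω, f q (Z q ω) ∂P - ∫ ω, f p (Z p ω) ∂P := by
  have hs1 : s ≤ 1 := hsc.trans (hp.1.trans (hp.2.trans hc))
  have hq' : q ∈ Icc c₁ c₂ := ⟨hp.1.trans hpq, hq⟩
  obtain ⟨a, ha⟩ := hf.hasCompactSupport_sub_const p hp
  obtain ⟨C, hC⟩ := hf.bounded
  have hint {c : ℝ} (hc : c ∈ Icc c₁ c₂) (t : ℝ) : Integrable (fun ω => f c (Z t ω)) P :=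
    hZ.integrable_comp h0 hs1 (hf.contDiff c hc).continuous (hC c hc) t
  obtain ⟨hcomp, hdynkin⟩ := hZ.dynkin_formula h0 hA hE hs (hsc.trans hp.1) hpq (hq.trans hc)
    (hf.contDiff p hp) ha
  have htime : Integrable (fun ω => f q (Z q ω) - f p (Z q ω)) P := (hint hq' q).sub (hint hp q)
  refine ⟨htime.add hcomp, ?_⟩
  simp only [compensatedIncrement]
  rw [integral_add htime hcomp, hdynkin, integral_sub (hint hq' q) (hint hp q),
    integral_sub (hint hp q) (hint hp p)]
  ring

theorem tendsto_integral_compensatedIncrement_div (hZ : RefDiffusion P E b σ Z s)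
    (h0 : ∀ᵐ ω ∂P, Z s ω = z) (hA : A1 E b σ) (hE : IsOpen E) (hs : 0 ≤ s)
    (hf : IsTestFunction f f' c₁ c₂) (hsuper : IsBackwardSupersolution E b σ f f' c₁ c₂)
    (hsc : s ≤ c₁) (hc : c₂ ≤ 1) {p : ℝ} (hp : p ∈ Ico c₁ c₂) :
    Tendsto (fun q => ∫ ω, max (compensatedIncrement E b σ f (Z · ω) p q / (q - p)) 0 ∂P)
      (𝓝[>] p) (𝓝 0) := by
  obtain ⟨C, hC⟩ := hsuper.exists_bound_compensatedIncrement_div hf hA hE (hs.trans hsc) hc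
  have hp' := Ico_subset_Icc_self hp
  suffices h : Tendsto (fun q => ∫ ω, max (compensatedIncrement E b σ f (Z · ω) p q / (q - p)) 0 ∂P)
      (𝓝[>] p) (𝓝 (∫ _, 0 ∂P)) by rwa [integral_zero] at h
  refine tendsto_integral_filter_of_dominated_convergence (fun _ => C) ?_ ?_
    (integrable_const _) ?_
  · filter_upwards [Ioc_mem_nhdsGT hp.2] with q hq
    exact (((hZ.integral_sub_integral h0 hA hE hs hf hsc hc hp' hq.1.le hq.2).1.div_const
      _).sup (integrable_const 0)).aestronglyMeasurable
  · filter_upwards [Ioc_mem_nhdsGT hp.2] with q hq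
    filter_upwards [hZ.2.1] with ω hω using hC _ hω p hp' q hq
  · filter_upwards [hZ.2.1] with ω hω using
      hsuper.tendsto_compensatedIncrement_div hf hA hE (hs.trans hsc) hc hω hp

theorem integral_le_of_isBackwardSupersolution (hZ : RefDiffusion P E b σ Z s)
    (h0 : ∀ᵐ ω ∂P, Z s ω = z) (hA : A1 E b σ) (hE : IsOpen E) (hs : 0 ≤ s)
    (hf : IsTestFunction f f' c₁ c₂) (hsuper : IsBackwardSupersolution E b σ f f' c₁ c₂)
    (hsc : s ≤ c₁) (hcc : c₁ ≤ c₂) (hc : c₂ ≤ 1) :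
    ∫ ω, f c₂ (Z c₂ ω) ∂P ≤ ∫ ω, f c₁ (Z c₁ ω) ∂P := by
  refine image_le_of_liminf_slope_right_le_deriv_boundary
    (f := fun c => ∫ ω, f c (Z c ω) ∂P) (B := fun _ => ∫ ω, f c₁ (Z c₁ ω) ∂P) (B' := 0)
    (hZ.continuousOn_integral h0 (hsc.trans (hcc.trans hc)) hf) le_rfl continuousOn_const
    (fun x _ => hasDerivWithinAt_const _ _ _) (fun p hp r hr => Eventually.frequently ?_)
    (right_mem_Icc.2 hcc)
  filter_upwards [Ioc_mem_nhdsGT hp.2, (hZ.tendsto_integral_compensatedIncrement_div h0 hA hE hs hf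
    hsuper hsc hc hp).eventually_lt_const hr] with q hq hqr
  obtain ⟨hint, hincr⟩ := hZ.integral_sub_integral h0 hA hE hs hf hsc hc (Ico_subset_Icc_self hp)
    hq.1.le hq.2
  rw [slope_def_field, ← hincr, ← integral_div]
  refine lt_of_le_of_lt (integral_mono (hint.div_const _)
    ((hint.div_const _).sup (integrable_const 0)) fun ω => le_max_left _ _) hqr

end RefDiffusion

section Calculus

variable {f f' f'' : ℝ → ℝ}

theorem contDiff_two_of_hasDerivAt (hf : ∀ x, HasDerivAt f (f' x) x)
    (hf' : ∀ x, HasDerivAt f' (f'' x) x) (hcont : Continuous f'') : ContDiff ℝ 2 f := by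
  rw [← one_add_one_eq_two, contDiff_succ_iff_deriv, deriv_eq hf, contDiff_one_iff_deriv,
    deriv_eq hf']
  exact ⟨fun x => (hf x).differentiableAt, by simp, fun x => (hf' x).differentiableAt, hcont⟩

theorem killedGenerator_of_hasDerivAt {E : Set ℝ} {b σ : ℝ → ℝ → ℝ} {u x : ℝ} (hx : x ∈ E)
    (hf : ∀ x, HasDerivAt f (f' x) x) (hf' : ∀ x, HasDerivAt f' (f'' x) x) :
    killedGenerator E b σ u f x = b u x * f' x + σ u x ^ 2 / 2 * f'' x := by
  rw [killedGenerator_of_mem hx, deriv_eq hf, deriv_eq hf']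

theorem hasDerivAt_max_zero_pow (n : ℕ) (x : ℝ) :
    HasDerivAt (fun x : ℝ => max 0 x ^ (n + 2)) ((n + 2) * max 0 x ^ (n + 1)) x := by
  have hne (x : ℝ) (hx : x ≠ 0) :
      HasDerivAt (fun x : ℝ => max 0 x ^ (n + 2)) ((n + 2) * max 0 x ^ (n + 1)) x := by
    rcases hx.lt_or_gt with hneg | hpos
    · have hzero : (fun x : ℝ => max 0 x ^ (n + 2)) =ᶠ[𝓝 x] fun _ => 0 := by
        filter_upwards [Iio_mem_nhds hneg] with w hw
        rw [max_eq_left (le_of_lt hw), zero_pow (by lia)]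
      simpa [max_eq_left hneg.le] using (hasDerivAt_const x (0 : ℝ)).congr_of_eventuallyEq hzero
    · have hpow : (fun x : ℝ => max 0 x ^ (n + 2)) =ᶠ[𝓝 x] fun x => x ^ (n + 2) := by
        filter_upwards [Ioi_mem_nhds hpos] with w hw
        rw [max_eq_right (le_of_lt hw)]
      simpa [max_eq_right hpos.le] using (hasDerivAt_pow (n + 2) x).congr_of_eventuallyEq hpow
  rcases eq_or_ne x 0 with rfl | hx
  · exact hasDerivAt_of_hasDerivAt_of_ne hne (by fun_prop) (by fun_prop)
  · exact hne x hx

end Calculus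

section Survival

/-- The `C²` bump `((ε² - (x - z)²)₊)³`, supported in the closed ball of radius `ε` about `z`. -/
def cubicBump (z ε x : ℝ) : ℝ := max 0 (ε ^ 2 - (x - z) ^ 2) ^ 3

variable {z ε : ℝ}

theorem hasDerivAt_cubicBump (x : ℝ) :
    HasDerivAt (cubicBump z ε) (-6 * (max 0 (ε ^ 2 - (x - z) ^ 2) ^ 2 * (x - z))) x := by
  have hinner : HasDerivAt (fun x => ε ^ 2 - (x - z) ^ 2) (-(2 * (x - z))) x := by
    simpa using (((hasDerivAt_id x).sub_const z).pow 2).const_sub (ε ^ 2)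
  refine ((hasDerivAt_max_zero_pow 1 _).comp x hinner).congr_deriv ?_
  norm_num
  ring

theorem hasDerivAt_deriv_cubicBump (x : ℝ) :
    HasDerivAt (fun x => -6 * (max 0 (ε ^ 2 - (x - z) ^ 2) ^ 2 * (x - z)))
      (24 * (max 0 (ε ^ 2 - (x - z) ^ 2) * (x - z) ^ 2) - 6 * max 0 (ε ^ 2 - (x - z) ^ 2) ^ 2)
      x := by
  have hinner : HasDerivAt (fun x => ε ^ 2 - (x - z) ^ 2) (-(2 * (x - z))) x := by
    simpa using (((hasDerivAt_id x).sub_const z).pow 2).const_sub (ε ^ 2)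
  refine ((((hasDerivAt_max_zero_pow 0 _).comp x hinner).mul
    ((hasDerivAt_id x).sub_const z)).const_mul (-6)).congr_deriv ?_
  norm_num
  ring

theorem contDiff_cubicBump : ContDiff ℝ 2 (cubicBump z ε) :=
  contDiff_two_of_hasDerivAt hasDerivAt_cubicBump hasDerivAt_deriv_cubicBump (by fun_prop)

theorem cubicBump_nonneg (x : ℝ) : 0 ≤ cubicBump z ε x := by
  unfold cubicBump
  positivity

theorem cubicBump_eq_zero {x : ℝ} (hε : 0 ≤ ε) (hx : ε ≤ |x - z|) : cubicBump z ε x = 0 := by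
  have hsq : ε ^ 2 ≤ (x - z) ^ 2 := sq_abs (x - z) ▸ pow_le_pow_left₀ hε hx 2
  rw [cubicBump, max_eq_left (sub_nonpos.2 hsq), zero_pow three_ne_zero]

theorem hasCompactSupport_cubicBump (hε : 0 ≤ ε) : HasCompactSupport (cubicBump z ε) :=
  .intro (isCompact_closedBall z ε) fun _ hx =>
    cubicBump_eq_zero hε (not_le.1 (Metric.mem_closedBall.not.1 hx)).le

-- Near the boundary of the bump its second derivative dominates; the rest is absorbed by `Λ`.
theorem A1.exists_killedGenerator_cubicBump_ge {E : Set ℝ} {b σ : ℝ → ℝ → ℝ} (hA : A1 E b σ)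
    (hε : 0 < ε) (z : ℝ) : ∃ Λ, ∀ u ∈ Icc (0 : ℝ) 1, ∀ x,
      0 ≤ Λ * cubicBump z ε x + killedGenerator E b σ u (cubicBump z ε) x := by
  obtain ⟨C, hC⟩ := hA.bounded
  obtain ⟨σ₀, hσ₀, hσ⟩ := hA.elliptic
  set G := 12 * σ₀ ^ 2 + 3 * C ^ 2 + 6 * |C| * ε
  have hΛ : 0 ≤ G ^ 2 / (48 * σ₀ ^ 2 * ε ^ 2) := by positivity
  refine ⟨G ^ 2 / (48 * σ₀ ^ 2 * ε ^ 2), fun u hu x => ?_⟩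
  by_cases hxE : x ∈ E
  · obtain ⟨hb, hσC⟩ := hC u hu x hxE
    rw [killedGenerator_of_hasDerivAt hxE hasDerivAt_cubicBump hasDerivAt_deriv_cubicBump]
    set Λ := G ^ 2 / (48 * σ₀ ^ 2 * ε ^ 2) with hΛ_def
    rw [cubicBump]
    rcases le_total (ε ^ 2 - (x - z) ^ 2) 0 with hm | hm
    · simp [max_eq_left hm]
    rw [max_eq_right hm]
    set m := ε ^ 2 - (x - z) ^ 2
    have hdist : |x - z| ≤ ε := abs_le_of_sq_le_sq (by linarith) hε.le
    have hdrift : b u x * (x - z) ≤ |C| * ε := by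
      refine (le_abs_self _).trans (abs_mul (b u x) _ ▸ ?_)
      exact mul_le_mul (hb.trans (le_abs_self _)) hdist (abs_nonneg _) (abs_nonneg _)
    have hupper : σ u x ^ 2 ≤ C ^ 2 := sq_le_sq' (by linarith [abs_le.1 hσC]) (abs_le.1 hσC).2
    have hlower : σ₀ ^ 2 ≤ σ u x ^ 2 := pow_le_pow_left₀ hσ₀.le (hσ u hu x hxE) 2
    have hsquare : 0 ≤ 12 * σ₀ ^ 2 * ε ^ 2 - G * m + Λ * m ^ 2 := by
      have h : 12 * σ₀ ^ 2 * ε ^ 2 - G * m + Λ * m ^ 2 =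
          (24 * σ₀ ^ 2 * ε ^ 2 - G * m) ^ 2 / (48 * σ₀ ^ 2 * ε ^ 2) := by
        rw [hΛ_def]
        field_simp
        ring
      rw [h]
      positivity
    have hfactor : 0 ≤ Λ * m ^ 2 + 12 * σ u x ^ 2 * (x - z) ^ 2 - 3 * σ u x ^ 2 * m
        - 6 * m * (b u x * (x - z)) := by
      nlinarith [mul_le_mul_of_nonneg_right hlower (sq_nonneg (x - z)),
        mul_le_mul_of_nonneg_right hupper hm, mul_le_mul_of_nonneg_right hdrift hm]
    linear_combination m * hfactor
  · rw [killedGenerator_of_notMem hxE, add_zero]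
    exact mul_nonneg hΛ (cubicBump_nonneg x)

namespace RefDiffusion

variable {Ω : Type*} {m0 : MeasurableSpace Ω} {P : Measure Ω} [IsProbabilityMeasure P]
  {E : Set ℝ} {b σ : ℝ → ℝ → ℝ} {Z : ℝ → Ω → ℝ} {s z t : ℝ}

theorem exp_mul_cubicBump_le_integral (hZ : RefDiffusion P E b σ Z s) (h0 : ∀ᵐ ω ∂P, Z s ω = z)
    (hA : A1 E b σ) (hE : IsOpen E) (hs : 0 ≤ s) (hst : s ≤ t) (ht : t ≤ 1) {ε : ℝ} (hε : 0 < ε) :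
    ∃ Λ, Real.exp (Λ * s) * ε ^ 6 ≤ Real.exp (Λ * t) * ∫ ω, cubicBump z ε (Z t ω) ∂P := by
  obtain ⟨Λ, hΛ⟩ := hA.exists_killedGenerator_cubicBump_ge hε z
  have hexp (c : ℝ) : HasDerivAt (fun c => Real.exp (Λ * c)) (Λ * Real.exp (Λ * c)) c := by
    simpa [mul_comm] using ((hasDerivAt_id c).const_mul Λ).exp
  have htest : IsTestFunction (fun c x => -Real.exp (Λ * c) * cubicBump z ε x)
      (fun c x => -(Λ * Real.exp (Λ * c)) * cubicBump z ε x) s t :=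
    .of_comp (F := fun c y => -Real.exp (Λ * c) * y) (F' := fun c y => -(Λ * Real.exp (Λ * c)) * y)
      (d := 0) (fun c _ => by fun_prop) (fun c _ y => (hexp c).neg.mul_const y)
      (by fun_prop) (by fun_prop) contDiff_cubicBump
      (by simpa using hasCompactSupport_cubicBump hε.le)
  have hsuper : IsBackwardSupersolution E b σ (fun c x => -Real.exp (Λ * c) * cubicBump z ε x)
      (fun c x => -(Λ * Real.exp (Λ * c)) * cubicBump z ε x) s t := fun p hp u hu x => by
    have hgen := mul_nonneg (Real.exp_pos (Λ * p)).le
      (hΛ u ⟨hs.trans (hp.1.trans hu.1), hu.2.trans ht⟩ x)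
    rw [killedGenerator_const_mul]
    linarith
  have hle := hZ.integral_le_of_isBackwardSupersolution h0 hA hE hs htest hsuper le_rfl hst ht
  have hstart : ∫ ω, cubicBump z ε (Z s ω) ∂P = ε ^ 6 := by
    rw [integral_congr_ae (g := fun _ => ε ^ 6) (h0.mono fun ω hω => ?_)]
    · simp
    · simp only [hω, cubicBump, sub_self]
      rw [zero_pow two_ne_zero, sub_zero, max_eq_right (sq_nonneg ε)]
      ring
  simp only [integral_const_mul, hstart] at hle
  exact ⟨Λ, by linarith⟩

theorem map_ne_zero (hZ : RefDiffusion P E b σ Z s) (h0 : ∀ᵐ ω ∂P, Z s ω = z)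
    (hA : A1 E b σ) (hE : IsOpen E) (hz : z ∈ E) (hs : 0 ≤ s) (hst : s ≤ t) (ht : t ≤ 1) :
    P.map (Z t) E ≠ 0 := by
  intro hzero
  rw [Measure.map_apply (hZ.measurable h0 (hst.trans ht) t) hE.measurableSet] at hzero
  obtain ⟨ε, hε, hball⟩ := Metric.isOpen_iff.1 hE z hz
  obtain ⟨Λ, hΛ⟩ := hZ.exp_mul_cubicBump_le_integral h0 hA hE hs hst ht hε
  have hvanish : (fun ω => cubicBump z ε (Z t ω)) =ᵐ[P] 0 := by
    filter_upwards [measure_eq_zero_iff_ae_notMem.1 hzero] with ω hω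
    exact cubicBump_eq_zero hε.le (not_lt.1 fun h => hω (hball (Metric.mem_ball.2 h)))
  rw [integral_eq_zero_of_ae hvanish, mul_zero] at hΛ
  exact hΛ.not_gt (by positivity)

end RefDiffusion

end Survival

section TruncatedSquare

/-- The tent function `(1 - |w|)₊`. -/
def tent (w : ℝ) : ℝ := max 0 (1 - |w|)

theorem tent_nonneg (w : ℝ) : 0 ≤ tent w := le_max_left _ _

theorem tent_le_one (w : ℝ) : tent w ≤ 1 := max_le zero_le_one (by linarith [abs_nonneg w])

theorem one_sub_abs_le_tent (w : ℝ) : 1 - |w| ≤ tent w := le_max_right _ _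

theorem tent_eq_zero {w : ℝ} (hw : 1 ≤ |w|) : tent w = 0 := max_eq_left (by linarith)

theorem tent_lt_one {w : ℝ} (hw : w ≠ 0) : tent w < 1 :=
  max_lt one_pos (by linarith [abs_pos.2 hw])

theorem tent_le_tent {v w : ℝ} (h : |v| ≤ |w|) : tent w ≤ tent v :=
  max_le_max_left 0 (by linarith)

theorem tent_mul_abs (w : ℝ) : tent w * |w| = tent w * (1 - tent w) := by
  rcases le_total 1 |w| with h | h
  · simp [tent_eq_zero h]
  · rw [tent, max_eq_right (by linarith), sub_sub_cancel]

@[fun_prop]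
theorem continuous_tent : Continuous tent := by
  unfold tent
  fun_prop

theorem hasDerivAt_tent_pow (n : ℕ) {w : ℝ} (hw : w ≠ 0) :
    HasDerivAt (fun w => tent w ^ (n + 2))
      ((n + 2) * tent w ^ (n + 1) * -(SignType.sign w : ℝ)) w :=
  (hasDerivAt_max_zero_pow n _).comp w ((hasDerivAt_abs hw).const_sub 1)

/-- A `C²` truncation of `w ↦ w²`, equal to `(∫₀^w (1 - |u|)₊² du)²`. The integrand decreases
linearly away from `0`, fast enough to compensate the Lipschitz variation of a diffusion
coefficient. -/
def truncSq (w : ℝ) : ℝ := ((1 - tent w ^ 3) / 3) ^ 2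

theorem hasDerivAt_truncSq (w : ℝ) :
    HasDerivAt truncSq (2 / 3 * (w * (tent w ^ 2 + tent w ^ 3 + tent w ^ 4))) w := by
  have hne (w : ℝ) (hw : w ≠ 0) :
      HasDerivAt truncSq (2 / 3 * (w * (tent w ^ 2 + tent w ^ 3 + tent w ^ 4))) w := by
    refine ((((hasDerivAt_tent_pow 1 hw).const_sub 1).div_const 3).pow 2).congr_deriv ?_
    have hsign : (SignType.sign w : ℝ) * |w| = w := sign_mul_abs w
    norm_num
    linear_combination (2 / 3 * (tent w ^ 2 + tent w ^ 3 + tent w ^ 4)) * hsign -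
      (2 / 3 * (tent w + tent w ^ 2 + tent w ^ 3) * (SignType.sign w : ℝ)) * tent_mul_abs w
  rcases eq_or_ne w 0 with rfl | hw
  · refine hasDerivAt_of_hasDerivAt_of_ne hne ?_ (by fun_prop)
    unfold truncSq
    fun_prop
  · exact hne w hw

theorem hasDerivAt_deriv_truncSq (w : ℝ) :
    HasDerivAt (fun w => 2 / 3 * (w * (tent w ^ 2 + tent w ^ 3 + tent w ^ 4)))
      (2 / 3 * (5 * tent w ^ 4 - 2 * tent w)) w := by
  have hne (w : ℝ) (hw : w ≠ 0) :
      HasDerivAt (fun w => 2 / 3 * (w * (tent w ^ 2 + tent w ^ 3 + tent w ^ 4)))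
        (2 / 3 * (5 * tent w ^ 4 - 2 * tent w)) w := by
    refine (((hasDerivAt_id w).mul (((hasDerivAt_tent_pow 0 hw).add
      (hasDerivAt_tent_pow 1 hw)).add (hasDerivAt_tent_pow 2 hw))).const_mul (2 / 3)).congr_deriv ?_
    have hsign : w * (SignType.sign w : ℝ) = |w| := self_mul_sign w
    simp only [id, Pi.add_apply]
    push_cast
    linear_combination (-(2 / 3) * (2 * tent w + 3 * tent w ^ 2 + 4 * tent w ^ 3)) * hsign -
      (2 / 3 * (2 + 3 * tent w + 4 * tent w ^ 2)) * tent_mul_abs w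
  rcases eq_or_ne w 0 with rfl | hw
  · exact hasDerivAt_of_hasDerivAt_of_ne hne (by fun_prop) (by fun_prop)
  · exact hne w hw

theorem truncSq_nonneg (w : ℝ) : 0 ≤ truncSq w := sq_nonneg _

theorem truncSq_of_one_le {w : ℝ} (hw : 1 ≤ |w|) : truncSq w = 1 / 9 := by
  norm_num [truncSq, tent_eq_zero hw]

theorem sqrt_truncSq (w : ℝ) : √(truncSq w) = (1 - tent w ^ 3) / 3 :=
  Real.sqrt_sq (by linarith [pow_le_one₀ (n := 3) (tent_nonneg w) (tent_le_one w)])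

theorem one_sub_tent_le_sqrt_truncSq (w : ℝ) : 1 - tent w ≤ 3 * √(truncSq w) := by
  have : tent w ^ 3 ≤ tent w := pow_le_of_le_one (tent_nonneg w) (tent_le_one w) three_ne_zero
  linarith [sqrt_truncSq w]

theorem truncSq_le_sq (w : ℝ) : truncSq w ≤ w ^ 2 := by
  have hv := tent_le_one w
  have hcube : (1 - tent w ^ 3) / 3 ≤ 1 - tent w := by
    nlinarith [tent_nonneg w, mul_nonneg (sq_nonneg (1 - tent w)) (tent_nonneg w)]
  rw [← sq_abs w, truncSq]
  refine pow_le_pow_left₀ ?_ (hcube.trans (by linarith [one_sub_abs_le_tent w])) 2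
  linarith [pow_le_one₀ (n := 3) (tent_nonneg w) hv]

theorem truncSq_pos {w : ℝ} (hw : w ≠ 0) : 0 < truncSq w := by
  have : tent w ^ 3 < 1 := pow_lt_one₀ (tent_nonneg w) (tent_lt_one hw) three_ne_zero
  exact pow_pos (by linarith) 2

theorem truncSq_le_truncSq {v w : ℝ} (h : |v| ≤ |w|) : truncSq v ≤ truncSq w := by
  have hcube : tent w ^ 3 ≤ tent v ^ 3 := pow_le_pow_left₀ (tent_nonneg w) (tent_le_tent h) 3
  have hone : tent v ^ 3 ≤ 1 := pow_le_one₀ (tent_nonneg v) (tent_le_one v)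
  exact pow_le_pow_left₀ (by linarith) (by linarith) 2

theorem sq_deriv_truncSq (w : ℝ) :
    (2 / 3 * (w * (tent w ^ 2 + tent w ^ 3 + tent w ^ 4))) ^ 2 = 4 * tent w ^ 4 * truncSq w := by
  have hsq : (tent w * w) ^ 2 = (tent w * (1 - tent w)) ^ 2 := by
    rw [← tent_mul_abs, mul_pow, mul_pow, sq_abs]
  rw [truncSq]
  linear_combination (4 / 9 * (tent w + tent w ^ 2 + tent w ^ 3) ^ 2) * hsq

theorem abs_deriv_truncSq_le (w : ℝ) :
    |2 / 3 * (w * (tent w ^ 2 + tent w ^ 3 + tent w ^ 4))| ≤ 2 * (1 - tent w) := by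
  have hv := tent_nonneg w
  have hv1 := tent_le_one w
  rw [abs_mul, abs_mul, abs_of_pos (by norm_num : (0 : ℝ) < 2 / 3),
    abs_of_nonneg (by positivity : 0 ≤ tent w ^ 2 + tent w ^ 3 + tent w ^ 4)]
  have hpow : tent w ^ 2 + tent w ^ 3 + tent w ^ 4 ≤ 3 := by
    linarith [pow_le_one₀ (n := 2) hv hv1, pow_le_one₀ (n := 3) hv hv1,
      pow_le_one₀ (n := 4) hv hv1]
  linear_combination (2 / 3 * (tent w + tent w ^ 2 + tent w ^ 3)) * tent_mul_abs w +
    (2 / 3 * (1 - tent w)) * hpow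

theorem one_sub_le_deriv_deriv_truncSq_div_two (w : ℝ) :
    1 - 6 * (1 - tent w) ≤ (5 * tent w ^ 4 - 2 * tent w) / 3 := by
  have hv := tent_nonneg w
  have hv1 := tent_le_one w
  have hpow : 3 + 5 * tent w + 5 * tent w ^ 2 + 5 * tent w ^ 3 ≤ 18 := by
    linarith [pow_le_one₀ (n := 2) hv hv1, pow_le_one₀ (n := 3) hv hv1]
  linear_combination ((1 - tent w) / 3) * hpow

end TruncatedSquare

section AdaptedSquaredDistance

/-- `D` plays the role of a squared distance to `y` in the metric of the diffusion at time `t`,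
where `k = σ t y`: near time `t` and the point `y`, the generator of `D` is close to `1`, and
`√D` solves the eikonal inequality up to a factor which does not depend on the point. -/
structure IsAdaptedSqDist (E : Set ℝ) (b σ : ℝ → ℝ → ℝ) (t y : ℝ) (D : ℝ → ℝ) (k C γ : ℝ) :
    Prop where
  contDiff : ContDiff ℝ 2 D
  hasCompactSupport_sub_const : ∃ d, HasCompactSupport fun x => D x - d
  nonneg : ∀ x, 0 ≤ D x
  le_sq : ∀ x, D x ≤ ((x - y) / k) ^ 2
  exists_pos_le : ∀ r, 0 < r → ∃ c, 0 < c ∧ ∀ x, r ≤ |x - y| → c ≤ D x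
  sq_deriv_le : ∀ u ∈ Icc 0 t, ∀ x ∈ E,
    σ u x ^ 2 / 2 * deriv D x ^ 2 ≤ 2 * D x * (1 + C * (t - u) ^ γ)
  le_killedGenerator : ∀ u ∈ Icc 0 t, ∀ x ∈ E,
    1 - C * ((t - u) ^ γ + √(D x)) ≤ killedGenerator E b σ u D x

/-- The truncated squared distance to `y`, in units of `k`, with cutoff at distance `R`. -/
def truncSqDist (y k R x : ℝ) : ℝ := (R / k) ^ 2 * truncSq ((x - y) / R)

variable {y k R : ℝ}

theorem hasDerivAt_truncSqDist (hR : R ≠ 0) (x : ℝ) :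
    HasDerivAt (truncSqDist y k R) (R / k ^ 2 * (2 / 3 * ((x - y) / R *
      (tent ((x - y) / R) ^ 2 + tent ((x - y) / R) ^ 3 + tent ((x - y) / R) ^ 4)))) x := by
  refine (((hasDerivAt_truncSq _).comp x (((hasDerivAt_id x).sub_const y).div_const R)).const_mul
    ((R / k) ^ 2)).congr_deriv ?_
  simp only [id]
  field_simp

theorem hasDerivAt_deriv_truncSqDist (hR : R ≠ 0) (x : ℝ) :
    HasDerivAt (fun x => R / k ^ 2 * (2 / 3 * ((x - y) / R *
      (tent ((x - y) / R) ^ 2 + tent ((x - y) / R) ^ 3 + tent ((x - y) / R) ^ 4))))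
      (2 / 3 * (5 * tent ((x - y) / R) ^ 4 - 2 * tent ((x - y) / R)) / k ^ 2) x := by
  refine (((hasDerivAt_deriv_truncSq _).comp x
    (((hasDerivAt_id x).sub_const y).div_const R)).const_mul (R / k ^ 2)).congr_deriv ?_
  simp only [id]
  field_simp

theorem contDiff_truncSqDist (hR : R ≠ 0) : ContDiff ℝ 2 (truncSqDist y k R) :=
  contDiff_two_of_hasDerivAt (hasDerivAt_truncSqDist hR) (hasDerivAt_deriv_truncSqDist hR)
    (by fun_prop)

theorem hasCompactSupport_truncSqDist_sub (hR : 0 < R) :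
    HasCompactSupport fun x => truncSqDist y k R x - (R / k) ^ 2 * (1 / 9) :=
  .intro (isCompact_closedBall y R) fun x hx => by
    have hdist : R < |x - y| := not_le.1 (Metric.mem_closedBall.not.1 hx)
    rw [truncSqDist, truncSq_of_one_le, sub_self]
    rw [abs_div, abs_of_pos hR]
    exact (one_le_div hR).2 hdist.le

theorem truncSqDist_le_sq (hR : R ≠ 0) (x : ℝ) : truncSqDist y k R x ≤ ((x - y) / k) ^ 2 :=
  (mul_le_mul_of_nonneg_left (truncSq_le_sq _) (sq_nonneg _)).trans_eq (by field_simp)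

theorem exists_pos_le_truncSqDist (hR : R ≠ 0) (hk : k ≠ 0) {r : ℝ} (hr : 0 < r) :
    ∃ c, 0 < c ∧ ∀ x, r ≤ |x - y| → c ≤ truncSqDist y k R x := by
  refine ⟨(R / k) ^ 2 * truncSq (r / R), ?_, fun x hx => ?_⟩
  · have := truncSq_pos (div_ne_zero hr.ne' hR)
    positivity
  · refine mul_le_mul_of_nonneg_left (truncSq_le_truncSq ?_) (sq_nonneg _)
    rw [abs_div, abs_div, abs_of_pos hr]
    gcongr

theorem one_sub_tent_le_sqrt_truncSqDist (hR : 0 < R) (hk : 0 < k) (x : ℝ) :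
    1 - tent ((x - y) / R) ≤ 3 * k / R * √(truncSqDist y k R x) := by
  rw [truncSqDist, Real.sqrt_mul (sq_nonneg _), Real.sqrt_sq (by positivity)]
  refine (one_sub_tent_le_sqrt_truncSq _).trans_eq ?_
  field_simp

variable {σ₁ b₁ η B : ℝ}

theorem sq_deriv_truncSqDist_le (hR : R ≠ 0) (hk : 0 < k) (hσ : 0 ≤ σ₁) (hη : 0 ≤ η) {x : ℝ}
    (hclose : |σ₁ / k - 1| ≤ |(x - y) / R| + η) :
    σ₁ ^ 2 / 2 * deriv (truncSqDist y k R) x ^ 2 ≤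
      2 * truncSqDist y k R x * (1 + (2 * η + η ^ 2)) := by
  rw [(hasDerivAt_truncSqDist hR x).deriv, mul_pow, sq_deriv_truncSq, truncSqDist]
  set w := (x - y) / R
  set v := tent w
  have hv : 0 ≤ v := tent_nonneg w
  have hv1 : v ≤ 1 := tent_le_one w
  have hv2 : v ^ 2 ≤ 1 := pow_le_one₀ hv hv1
  have hscaled : σ₁ / k * v ^ 2 ≤ 1 + η := by
    have hupper : σ₁ / k * v ^ 2 ≤ (1 + |w| + η) * v ^ 2 :=
      mul_le_mul_of_nonneg_right (by linarith [le_abs_self (σ₁ / k - 1)]) (sq_nonneg v)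
    have htent : v ^ 2 + v ^ 2 * (1 - v) ≤ 1 := by nlinarith [mul_nonneg hv (sub_nonneg.2 hv1)]
    linear_combination hupper + v * tent_mul_abs w + htent + η * hv2
  have hsq : (σ₁ / k * v ^ 2) ^ 2 ≤ (1 + η) ^ 2 := pow_le_pow_left₀ (by positivity) hscaled 2
  calc _ = 2 * ((R / k) ^ 2 * truncSq w) * (σ₁ / k * v ^ 2) ^ 2 := by
        field_simp
        ring
    _ ≤ 2 * ((R / k) ^ 2 * truncSq w) * (1 + η) ^ 2 := by
        have := truncSq_nonneg w
        gcongr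
    _ = _ := by ring

theorem le_generator_truncSqDist (hR : 0 < R) (hk : 0 < k) (hσ : 0 ≤ σ₁) (hη : 0 ≤ η)
    (hσB : σ₁ ≤ B) (hbB : |b₁| ≤ B) {x : ℝ} (hclose : |σ₁ / k - 1| ≤ |(x - y) / R| + η) :
    1 - 2 * η - (2 + 6 * (B / k) ^ 2 + 2 * B * R / k ^ 2) * (1 - tent ((x - y) / R)) ≤
      b₁ * deriv (truncSqDist y k R) x + σ₁ ^ 2 / 2 * deriv (deriv (truncSqDist y k R)) x := by
  rw [deriv_eq (hasDerivAt_truncSqDist hR.ne'), deriv_eq (hasDerivAt_deriv_truncSqDist hR.ne')]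
  set w := (x - y) / R
  set v := tent w
  have hB : 0 ≤ B := hσ.trans hσB
  have hv1 : 0 ≤ 1 - v := sub_nonneg.2 (tent_le_one w)
  have hdrift : |b₁ * (R / k ^ 2 * (2 / 3 * (w * (v ^ 2 + v ^ 3 + v ^ 4))))| ≤
      2 * B * R / k ^ 2 * (1 - v) := by
    rw [abs_mul, abs_mul, abs_of_pos (by positivity : 0 < R / k ^ 2)]
    calc _ ≤ B * (R / k ^ 2 * (2 * (1 - v))) := by
          gcongr
          exact abs_deriv_truncSq_le w
      _ = _ := by ring
  have hlower : v - η ≤ σ₁ / k := sub_le_iff_le_add.2 <| max_le (by positivity) <| by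
    linarith [neg_abs_le (σ₁ / k - 1)]
  have hsquare : (σ₁ / k) ^ 2 ≤ (B / k) ^ 2 := by gcongr
  have hdiffusion : σ₁ ^ 2 / 2 * (2 / 3 * (5 * v ^ 4 - 2 * v) / k ^ 2) =
      (σ₁ / k) ^ 2 * ((5 * v ^ 4 - 2 * v) / 3) := by field_simp
  rw [hdiffusion]
  have hcurv := mul_le_mul_of_nonneg_left (one_sub_le_deriv_deriv_truncSq_div_two w)
    (sq_nonneg (σ₁ / k))
  linarith [sq_nonneg (σ₁ / k - 1), mul_le_mul_of_nonneg_right hsquare hv1, neg_abs_le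
    (b₁ * (R / k ^ 2 * (2 / 3 * (w * (v ^ 2 + v ^ 3 + v ^ 4)))))]

namespace A1

variable {E : Set ℝ} {b σ : ℝ → ℝ → ℝ} {t : ℝ}

theorem exists_abs_diffusion_div_sub_one_le (hA : A1 E b σ) (ht : t ≤ 1) (hy : y ∈ E)
    (hk : 0 < σ t y) : ∃ R H γ : ℝ, 0 < R ∧ 0 ≤ H ∧ 0 < γ ∧ γ ≤ 1 / 2 ∧
      ∀ u ∈ Icc 0 t, ∀ x ∈ E, |σ u x / σ t y - 1| ≤ |(x - y) / R| + H * (t - u) ^ γ := by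
  obtain ⟨K, hK⟩ := hA.lipschitz
  obtain ⟨K', γ, hγ, hK'⟩ := hA.holder
  refine ⟨σ t y / (|K| + 1), |K'| / σ t y, min γ (1 / 2), by positivity, by positivity,
    lt_min hγ (by norm_num), min_le_right _ _, fun u hu x hx => ?_⟩
  have ht' : t ∈ Icc (0 : ℝ) 1 := ⟨hu.1.trans hu.2, ht⟩
  have htu : 0 ≤ t - u := sub_nonneg.2 hu.2
  have hexp : (t - u) ^ γ ≤ (t - u) ^ min γ (1 / 2) :=
    Real.rpow_le_rpow_of_exponent_ge' htu (by linarith [hu.1])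
      (le_min hγ.le (by norm_num)) (min_le_left _ _)
  have htime : |σ t x - σ u x| ≤ |K'| * (t - u) ^ min γ (1 / 2) := by
    refine ((hK' x hx t ht' u ⟨hu.1, hu.2.trans ht⟩).2).trans ?_
    rw [abs_of_nonneg htu]
    gcongr
    exact le_abs_self K'
  have hspace : |σ t x - σ t y| ≤ (|K| + 1) * |x - y| := by
    refine ((hK t ht' x hx y hy).2).trans ?_
    gcongr
    linarith [le_abs_self K]
  rw [div_sub_one hk.ne', abs_div, abs_div, abs_div, abs_of_pos hk,
    abs_of_pos (by positivity : 0 < |K| + 1), div_div_eq_mul_div, div_mul_eq_mul_div, ← add_div]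
  gcongr
  linarith [abs_sub_le (σ u x) (σ t x) (σ t y), abs_sub_comm (σ u x) (σ t x)]

theorem exists_isAdaptedSqDist (hA : A1 E b σ) (ht : t ∈ Icc (0 : ℝ) 1) (hy : y ∈ E) :
    ∃ D k C γ, 0 < k ∧ 0 ≤ C ∧ 0 < γ ∧ γ ≤ 1 / 2 ∧ IsAdaptedSqDist E b σ t y D k C γ := by
  obtain ⟨B, hB⟩ := hA.bounded
  obtain ⟨σ₀, hσ₀, hσ⟩ := hA.elliptic
  have hk : 0 < σ t y := hσ₀.trans_le (hσ t ht y hy)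
  obtain ⟨R, H, γ, hR, hH, hγ, hγ', hclose⟩ := hA.exists_abs_diffusion_div_sub_one_le ht.2 hy hk
  have hB0 : 0 ≤ B := (abs_nonneg _).trans (hB t ht y hy).1
  generalize σ t y = k at hk hclose
  set N := 2 + 6 * (B / k) ^ 2 + 2 * B * R / k ^ 2
  have hN : 0 ≤ N * (3 * k / R) := by positivity
  refine ⟨truncSqDist y k R, k, 2 * H + H ^ 2 + N * (3 * k / R), γ, hk, by positivity, hγ, hγ',
    contDiff_truncSqDist hR.ne', ⟨_, hasCompactSupport_truncSqDist_sub hR⟩,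
    fun x => mul_nonneg (sq_nonneg _) (truncSq_nonneg _), truncSqDist_le_sq hR.ne',
    fun r hr => exists_pos_le_truncSqDist hR.ne' hk.ne' hr, fun u hu x hx => ?_,
    fun u hu x hx => ?_⟩
  all_goals
    have hu' : u ∈ Icc (0 : ℝ) 1 := ⟨hu.1, hu.2.trans ht.2⟩
    have hσpos : 0 ≤ σ u x := hσ₀.le.trans (hσ u hu' x hx)
    have hθ : 0 ≤ (t - u) ^ γ := Real.rpow_nonneg (sub_nonneg.2 hu.2) _
    have hθ1 : (t - u) ^ γ ≤ 1 :=
      Real.rpow_le_one (sub_nonneg.2 hu.2) (by linarith [hu.1, ht.2]) hγ.le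
    set θ := (t - u) ^ γ
  · refine (sq_deriv_truncSqDist_le hR.ne' hk hσpos (by positivity) (hclose u hu x hx)).trans ?_
    have hD : 0 ≤ truncSqDist y k R x := mul_nonneg (sq_nonneg _) (truncSq_nonneg _)
    gcongr
    nlinarith [mul_nonneg hN hθ, mul_nonneg (sq_nonneg H) (mul_nonneg hθ (sub_nonneg.2 hθ1))]
  · rw [killedGenerator_of_mem hx]
    refine le_trans ?_ (le_generator_truncSqDist hR hk hσpos (by positivity)
      ((le_abs_self _).trans (hB u hu' x hx).2) (hB u hu' x hx).1 (hclose u hu x hx))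
    have hsqrt := mul_le_mul_of_nonneg_left (one_sub_tent_le_sqrt_truncSqDist (y := y) hR hk x)
      (by positivity : 0 ≤ N)
    nlinarith [mul_nonneg hN hθ, mul_nonneg (sq_nonneg H) hθ, mul_nonneg
      (by positivity : 0 ≤ 2 * H + H ^ 2) (Real.sqrt_nonneg (truncSqDist y k R x))]

end A1

end AdaptedSquaredDistance

section Barrier

/-- The exponential rate of `barrier`. It is slightly smaller than the rate `1 / (2 * τ)` of the
Gaussian kernel, which leaves room for errors of relative size `C * τ ^ γ` in the generator. -/
def barrierRate (C γ τ : ℝ) : ℝ := (τ * (2 + 3 * C * τ ^ γ))⁻¹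

/-- The logarithm of the height of `barrier`, that of the Gaussian kernel up to a bounded term. -/
def barrierLogHeight (C γ τ : ℝ) : ℝ := -(1 / 2) * Real.log τ + 2 * C / γ * τ ^ γ

/-- A perturbation of the Gaussian kernel `τ ^ (-1 / 2) * exp (-x / (2 * τ))`, where `τ` is the time
to maturity and `x` a squared distance. -/
def barrier (C γ τ x : ℝ) : ℝ := Real.exp (barrierLogHeight C γ τ - barrierRate C γ τ * x)

/-- The derivative in `τ` of the logarithm of `barrier C γ τ x`. -/
def barrierLogDeriv (C γ τ x : ℝ) : ℝ :=
  -(1 / (2 * τ)) + 2 * C * (τ ^ γ / τ) +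
    (2 + 3 * C * (1 + γ) * τ ^ γ) * barrierRate C γ τ ^ 2 * x

variable {C γ τ x : ℝ}

theorem barrierRate_pos (hC : 0 ≤ C) (hτ : 0 < τ) : 0 < barrierRate C γ τ := by
  unfold barrierRate
  positivity

theorem barrierRate_le (hC : 0 ≤ C) (hτ : 0 < τ) : barrierRate C γ τ ≤ 1 / (2 * τ) := by
  rw [barrierRate, ← one_div]
  refine one_div_le_one_div_of_le (by positivity) ?_
  linarith [show 0 ≤ τ * (3 * C * τ ^ γ) by positivity]

theorem le_barrierRate (hC : 0 ≤ C) (hγ : 0 ≤ γ) (hτ : 0 < τ) (hτ1 : τ ≤ 1) :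
    1 / (τ * (2 + 3 * C)) ≤ barrierRate C γ τ := by
  rw [barrierRate, ← one_div]
  have hpow : 3 * C * τ ^ γ ≤ 3 * C :=
    mul_le_of_le_one_right (by positivity) (Real.rpow_le_one hτ.le hτ1 hγ)
  gcongr

theorem one_div_sub_le_barrierRate (hC : 0 ≤ C) (hτ : 0 < τ) :
    1 / (2 * τ) * (1 - 3 * C * τ ^ γ / 2) ≤ barrierRate C γ τ := by
  rw [barrierRate, ← one_div, le_div_iff₀ (by positivity)]
  calc 1 / (2 * τ) * (1 - 3 * C * τ ^ γ / 2) * (τ * (2 + 3 * C * τ ^ γ))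
      = 1 - (3 * C * τ ^ γ / 2) ^ 2 := by field_simp; ring
    _ ≤ 1 := sub_le_self _ (sq_nonneg _)

theorem hasDerivAt_barrierRate (hC : 0 ≤ C) (hτ : 0 < τ) :
    HasDerivAt (barrierRate C γ)
      (-(2 + 3 * C * (1 + γ) * τ ^ γ) * barrierRate C γ τ ^ 2) τ := by
  have hpow : HasDerivAt (fun τ : ℝ => τ ^ γ) (γ * τ ^ (γ - 1)) τ :=
    Real.hasDerivAt_rpow_const (.inl hτ.ne')
  have hne : τ * (2 + 3 * C * τ ^ γ) ≠ 0 := by positivity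
  refine (((hasDerivAt_id τ).mul ((hpow.const_mul (3 * C)).const_add 2)).inv hne).congr_deriv ?_
  simp only [id, Pi.mul_apply, barrierRate]
  rw [Real.rpow_sub_one hτ.ne']
  field_simp
  ring

theorem hasDerivAt_barrierLogHeight (hγ : γ ≠ 0) (hτ : 0 < τ) :
    HasDerivAt (barrierLogHeight C γ) (-(1 / (2 * τ)) + 2 * C * (τ ^ γ / τ)) τ := by
  have hpow : HasDerivAt (fun τ : ℝ => τ ^ γ) (γ * τ ^ (γ - 1)) τ :=
    Real.hasDerivAt_rpow_const (.inl hτ.ne')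
  refine (((Real.hasDerivAt_log hτ.ne').const_mul (-(1 / 2))).add
    (hpow.const_mul (2 * C / γ))).congr_deriv ?_
  rw [Real.rpow_sub_one hτ.ne']
  field_simp

theorem hasDerivAt_barrier (hC : 0 ≤ C) (hγ : γ ≠ 0) (hτ : 0 < τ) (x : ℝ) :
    HasDerivAt (fun τ => barrier C γ τ x) (barrierLogDeriv C γ τ x * barrier C γ τ x) τ := by
  refine ((hasDerivAt_barrierLogHeight hγ hτ).sub
    ((hasDerivAt_barrierRate hC hτ).mul_const x)).exp.congr_deriv ?_
  simp only [barrierLogDeriv, barrier, Pi.sub_apply]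
  ring

theorem continuousOn_barrierRate (hC : 0 ≤ C) : ContinuousOn (barrierRate C γ) (Ioi 0) :=
  fun _ hτ => (hasDerivAt_barrierRate hC hτ).continuousAt.continuousWithinAt

theorem continuousOn_barrier (hC : 0 ≤ C) (hγ : γ ≠ 0) :
    ContinuousOn (fun p : ℝ × ℝ => barrier C γ p.1 p.2) (Ioi 0 ×ˢ univ) := by
  have hheight : ContinuousOn (barrierLogHeight C γ) (Ioi 0) := fun _ hτ =>
    (hasDerivAt_barrierLogHeight hγ hτ).continuousAt.continuousWithinAt
  exact ((hheight.comp continuousOn_fst fun p hp => hp.1).sub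
    (((continuousOn_barrierRate hC).comp continuousOn_fst fun p hp => hp.1).mul
      continuousOn_snd)).rexp

theorem continuousOn_barrierLogDeriv (hC : 0 ≤ C) :
    ContinuousOn (fun p : ℝ × ℝ => barrierLogDeriv C γ p.1 p.2) (Ioi 0 ×ˢ univ) := by
  have hpow : ContinuousOn (fun p : ℝ × ℝ => p.1 ^ γ) (Ioi 0 ×ˢ univ) := fun p hp =>
    (continuousAt_fst.rpow_const (.inl (ne_of_gt hp.1))).continuousWithinAt
  have hrate : ContinuousOn (fun p : ℝ × ℝ => barrierRate C γ p.1) (Ioi 0 ×ˢ univ) :=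
    (continuousOn_barrierRate hC).comp continuousOn_fst fun p hp => hp.1
  have hne (p : ℝ × ℝ) (hp : p ∈ Ioi 0 ×ˢ univ) : p.1 ≠ 0 := ne_of_gt hp.1
  unfold barrierLogDeriv
  fun_prop (disch := simpa using hne)

/- The leading terms `-1 / (2 * τ)` and `barrierRate` cancel, and the quadratic terms cancel up to
`C * τ ^ γ * x * barrierRate ^ 2`. That leftover absorbs the error `C * √x * barrierRate` by AM-GM,
at the cost of a multiple of `τ ^ γ / τ ≥ τ ^ (-γ)`. -/
theorem barrierLogDeriv_add_sub_nonneg {A Q : ℝ} (hC : 0 ≤ C) (hγ : 0 ≤ γ) (hγ2 : γ ≤ 1 / 2)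
    (hτ : 0 < τ) (hτ1 : τ ≤ 1) (hx : 0 ≤ x) (hQ : Q ≤ 2 * x * (1 + C * τ ^ γ))
    (hA : 1 - C * (τ ^ γ + √x) ≤ A) :
    0 ≤ barrierLogDeriv C γ τ x + barrierRate C γ τ * A - barrierRate C γ τ ^ 2 * Q := by
  have hle := barrierRate_le (γ := γ) hC hτ
  have hpos := barrierRate_pos (γ := γ) hC hτ
  have hge := one_div_sub_le_barrierRate (γ := γ) hC hτ
  have hp : 0 < τ ^ γ := Real.rpow_pos_of_pos hτ γ
  have hpτ : τ ≤ (τ ^ γ) ^ 2 := by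
    rw [← Real.rpow_mul_natCast hτ.le]
    exact Real.self_le_rpow_of_le_one hτ.le hτ1 (by push_cast; linarith)
  have hdiv : τ ^ γ / τ = 2 * τ ^ γ * (1 / (2 * τ)) := by field_simp
  have hinv : 1 / τ ^ γ ≤ 2 * τ ^ γ * (1 / (2 * τ)) := by
    rw [← hdiv, div_le_div_iff₀ hp hτ]
    linarith
  unfold barrierLogDeriv
  rw [hdiv]
  generalize barrierRate C γ τ = h at *
  generalize τ ^ γ = p at *
  generalize 1 / (2 * τ) = j at *
  have hAMGM : h * √x ≤ (x * h ^ 2 * p + 1 / p) / 2 := by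
    have hsq : (x * h ^ 2 * p + 1 / p) / 2 - h * √x = (h * √x * p - 1) ^ 2 / (2 * p) := by
      nth_rw 1 [← Real.sq_sqrt hx]
      field_simp
      ring
    linarith [show 0 ≤ (h * √x * p - 1) ^ 2 / (2 * p) by positivity]
  have hgen : h * (1 - C * (p + √x)) ≤ h * A := by gcongr
  have hgrad : h ^ 2 * Q ≤ h ^ 2 * (2 * x * (1 + C * p)) := by gcongr
  linarith only [hgen, hgrad, hge, mul_le_mul_of_nonneg_left hAMGM hC,
    mul_le_mul_of_nonneg_left hinv hC, mul_le_mul_of_nonneg_left hle (show 0 ≤ C * p by positivity),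
    show 0 ≤ x * (C * γ * p) * h ^ 2 by positivity, show 0 ≤ x * (C * p) * h ^ 2 by positivity,
    mul_nonneg (show 0 ≤ C * p by positivity) (hpos.le.trans hle)]

theorem barrierLogDeriv_nonneg {c₀ : ℝ} (hC : 0 ≤ C) (hγ : 0 ≤ γ) (hτ : 0 < τ) (hτ1 : τ ≤ 1)
    (hc₀ : 0 ≤ c₀) (hx : c₀ ≤ x) (hτ₀ : τ ≤ 4 * c₀ / (2 + 3 * C) ^ 2) :
    0 ≤ barrierLogDeriv C γ τ x := by
  have hx0 : 0 ≤ x := hc₀.trans hx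
  have hrate : 1 / (2 * τ) ≤ 2 * barrierRate C γ τ ^ 2 * x := by
    calc 1 / (2 * τ) = τ * (1 / (2 * τ ^ 2)) := by field_simp
      _ ≤ 4 * c₀ / (2 + 3 * C) ^ 2 * (1 / (2 * τ ^ 2)) := by gcongr
      _ = 2 * (1 / (τ * (2 + 3 * C))) ^ 2 * c₀ := by field_simp; ring
      _ ≤ 2 * barrierRate C γ τ ^ 2 * x := by gcongr; exact le_barrierRate hC hγ hτ hτ1
  unfold barrierLogDeriv
  linarith [show 0 ≤ 3 * C * (1 + γ) * τ ^ γ * barrierRate C γ τ ^ 2 * x by positivity,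
    show 0 ≤ 2 * C * (τ ^ γ / τ) by positivity]

theorem exp_neg_half_mul_log (hτ : 0 < τ) : Real.exp (-(1 / 2) * Real.log τ) = (√τ)⁻¹ := by
  rw [neg_mul, Real.exp_neg, one_div_mul_eq_div, ← Real.log_sqrt hτ.le,
    Real.exp_log (Real.sqrt_pos.2 hτ)]

theorem barrier_le (hC : 0 ≤ C) (hγ : 0 < γ) (hτ : 0 < τ) (hτ1 : τ ≤ 1) :
    barrier C γ τ x ≤
      Real.exp (2 * C / γ) * (√τ)⁻¹ * Real.exp (-(barrierRate C γ τ * x)) := by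
  have hpow : 2 * C / γ * τ ^ γ ≤ 2 * C / γ :=
    mul_le_of_le_one_right (by positivity) (Real.rpow_le_one hτ.le hτ1 hγ.le)
  rw [← exp_neg_half_mul_log hτ, ← Real.exp_add, ← Real.exp_add, barrier, barrierLogHeight]
  gcongr
  linarith

theorem barrier_le_mul_sqrt {c : ℝ} (hC : 0 ≤ C) (hγ : 0 < γ) (hτ : 0 < τ) (hτ1 : τ ≤ 1)
    (hc : 0 < c) (hx : c ≤ x) :
    barrier C γ τ x ≤ Real.exp (2 * C / γ) * ((2 + 3 * C) / c) * √τ := by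
  have hrate : c / (τ * (2 + 3 * C)) ≤ barrierRate C γ τ * x := by
    rw [div_eq_mul_one_div, mul_comm]
    have := (barrierRate_pos (γ := γ) hC hτ).le
    gcongr
    exact le_barrierRate hC hγ.le hτ hτ1
  have hexp : Real.exp (-(barrierRate C γ τ * x)) ≤ (c / (τ * (2 + 3 * C)))⁻¹ := by
    rw [Real.exp_neg]
    exact inv_anti₀ (by positivity)
      (hrate.trans (by linarith [Real.add_one_le_exp (barrierRate C γ τ * x)]))
  calc barrier C γ τ x
      ≤ Real.exp (2 * C / γ) * (√τ)⁻¹ * (c / (τ * (2 + 3 * C)))⁻¹ :=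
        (barrier_le hC hγ hτ hτ1).trans (by gcongr)
    _ = Real.exp (2 * C / γ) * ((2 + 3 * C) / c) * (τ / √τ) := by field_simp
    _ = Real.exp (2 * C / γ) * ((2 + 3 * C) / c) * √τ := by rw [Real.div_sqrt]

theorem barrier_le_inv_sqrt {τ₁ : ℝ} (hC : 0 ≤ C) (hγ : 0 < γ) (hτ₁ : 0 < τ₁) (hττ : τ₁ ≤ τ)
    (hτ1 : τ ≤ 1) (hx : 0 ≤ x) : barrier C γ τ x ≤ Real.exp (2 * C / γ) * (√τ₁)⁻¹ := by
  have hτ := hτ₁.trans_le hττ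
  have hrate := mul_nonneg (barrierRate_pos (γ := γ) hC hτ).le hx
  refine (barrier_le hC hγ hτ hτ1).trans ?_
  calc Real.exp (2 * C / γ) * (√τ)⁻¹ * Real.exp (-(barrierRate C γ τ * x))
      ≤ Real.exp (2 * C / γ) * (√τ)⁻¹ * 1 := by gcongr; exact Real.exp_le_one_iff.2 (by linarith)
    _ ≤ Real.exp (2 * C / γ) * (√τ₁)⁻¹ := by rw [mul_one]; gcongr

theorem le_barrier {k : ℝ} (hC : 0 ≤ C) (hγ : 0 ≤ γ) (hτ : 0 < τ) (hx : x ≤ τ / k ^ 2) :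
    Real.exp (-(1 / (2 * k ^ 2))) * (√τ)⁻¹ ≤ barrier C γ τ x := by
  have hheight : 0 ≤ 2 * C / γ * τ ^ γ := by positivity
  have hrate : barrierRate C γ τ * x ≤ 1 / (2 * k ^ 2) :=
    calc barrierRate C γ τ * x ≤ barrierRate C γ τ * (τ / k ^ 2) :=
          mul_le_mul_of_nonneg_left hx (barrierRate_pos hC hτ).le
      _ ≤ 1 / (2 * τ) * (τ / k ^ 2) := by gcongr; exact barrierRate_le hC hτ
      _ = 1 / (2 * k ^ 2) := by field_simp
  rw [← exp_neg_half_mul_log hτ, ← Real.exp_add, barrier, barrierLogHeight]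
  gcongr
  linarith

variable {E : Set ℝ} {b σ : ℝ → ℝ → ℝ}

theorem killedGenerator_exp_sub_mul {D : ℝ → ℝ} (hD : ContDiff ℝ 2 D) (u a h : ℝ) {x : ℝ}
    (hx : x ∈ E) :
    killedGenerator E b σ u (fun x => Real.exp (a - h * D x)) x =
      Real.exp (a - h * D x) *
        (h ^ 2 * (σ u x ^ 2 / 2 * deriv D x ^ 2) - h * killedGenerator E b σ u D x) := by
  have hD1 (x : ℝ) : HasDerivAt D (deriv D x) x :=
    (hD.differentiable two_ne_zero x).hasDerivAt
  have hD2 (x : ℝ) : HasDerivAt (deriv D) (deriv (deriv D) x) x :=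
    (hD.differentiable_deriv_two x).hasDerivAt
  have hexp (x : ℝ) : HasDerivAt (fun x => Real.exp (a - h * D x))
      (Real.exp (a - h * D x) * -(h * deriv D x)) x := (((hD1 x).const_mul h).const_sub a).exp
  rw [killedGenerator_of_hasDerivAt hx hexp fun x => (hexp x).mul ((hD2 x).const_mul h).neg,
    killedGenerator_of_mem hx]
  ring

variable {t y k : ℝ} {D : ℝ → ℝ}

theorem IsAdaptedSqDist.isTestFunction_barrier (hD : IsAdaptedSqDist E b σ t y D k C γ)
    (hC : 0 ≤ C) (hγ : γ ≠ 0) {δ c₁ : ℝ} (hδ : 0 < δ) :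
    IsTestFunction (fun c x => barrier C γ (t + δ - c) (D x))
      (fun c x => -(barrierLogDeriv C γ (t + δ - c) (D x) * barrier C γ (t + δ - c) (D x)))
      c₁ t := by
  obtain ⟨d, hd⟩ := hD.hasCompactSupport_sub_const
  have hpos {c : ℝ} (hc : c ∈ Icc c₁ t) : 0 < t + δ - c := by linarith [hc.2]
  have htime : ContinuousOn (fun p : ℝ × ℝ => (t + δ - p.1, p.2)) (Icc c₁ t ×ˢ univ) := by fun_prop
  have hmaps : MapsTo (fun p : ℝ × ℝ => (t + δ - p.1, p.2)) (Icc c₁ t ×ˢ univ) (Ioi 0 ×ˢ univ) :=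
    fun p hp => ⟨hpos hp.1, mem_univ _⟩
  refine .of_comp (F := fun c x => barrier C γ (t + δ - c) x)
    (F' := fun c x => -(barrierLogDeriv C γ (t + δ - c) x * barrier C γ (t + δ - c) x))
    (fun c _ => ?_) (fun c hc x => ?_) ((continuousOn_barrier hC hγ).comp htime hmaps)
    (((continuousOn_barrierLogDeriv hC).mul (continuousOn_barrier hC hγ)).comp htime hmaps).neg
    hD.contDiff hd
  · unfold barrier
    fun_prop
  · simpa [Function.comp_def] using (hasDerivAt_barrier hC hγ (hpos hc) x).scomp c
      ((hasDerivAt_id c).const_sub (t + δ))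

theorem IsAdaptedSqDist.isBackwardSupersolution_barrier (hD : IsAdaptedSqDist E b σ t y D k C γ)
    (hC : 0 ≤ C) (hγ : 0 ≤ γ) (hγ2 : γ ≤ 1 / 2) {δ c₀ c₁ : ℝ} (hδ : 0 < δ) (hc₀ : 0 ≤ c₀)
    (hoff : ∀ x ∉ E, c₀ ≤ D x) (hc₁ : 0 ≤ c₁) (hT : t + δ - c₁ ≤ 1)
    (hT₀ : t + δ - c₁ ≤ 4 * c₀ / (2 + 3 * C) ^ 2) :
    IsBackwardSupersolution E b σ (fun c x => barrier C γ (t + δ - c) (D x))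
      (fun c x => -(barrierLogDeriv C γ (t + δ - c) (D x) * barrier C γ (t + δ - c) (D x)))
      c₁ t := by
  intro p hp u hu x
  have hτ : 0 < t + δ - p := by linarith [hp.2]
  have hτ1 : t + δ - p ≤ 1 := by linarith [hp.1]
  by_cases hx : x ∈ E
  · have hut : u ∈ Icc 0 t := ⟨hc₁.trans (hp.1.trans hu.1), hu.2⟩
    have hDx := hD.nonneg x
    have hpow : (t - u) ^ γ ≤ (t + δ - p) ^ γ :=
      Real.rpow_le_rpow (by linarith [hu.2]) (by linarith [hu.1]) hγ
    have hsuper := barrierLogDeriv_add_sub_nonneg hC hγ hγ2 hτ hτ1 hDx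
      ((hD.sq_deriv_le u hut x hx).trans (by gcongr))
      (le_trans (by gcongr) (hD.le_killedGenerator u hut x hx))
    simp only [barrier]
    rw [killedGenerator_exp_sub_mul hD.contDiff u _ _ hx]
    linarith [mul_nonneg (Real.exp_pos (barrierLogHeight C γ (t + δ - p) -
      barrierRate C γ (t + δ - p) * D x)).le hsuper]
  · rw [killedGenerator_of_notMem hx, add_zero, neg_nonpos]
    exact mul_nonneg (barrierLogDeriv_nonneg hC hγ hτ hτ1 hc₀ (hoff x hx)
      ((by linarith [hp.1] : _ ≤ t + δ - c₁).trans hT₀)) (Real.exp_pos _).le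

end Barrier

section BallMass

variable {E : Set ℝ} {b σ : ℝ → ℝ → ℝ} {t y k C γ : ℝ} {D : ℝ → ℝ}

theorem IsAdaptedSqDist.exists_bound_barrier (hD : IsAdaptedSqDist E b σ t y D k C γ) (τ : ℝ) :
    ∃ M, ∀ x, |barrier C γ τ (D x)| ≤ M := by
  obtain ⟨d, hd⟩ := hD.hasCompactSupport_sub_const
  obtain ⟨M, hM⟩ := exists_bound_comp (F := fun _ => barrier C γ τ) (c₁ := 0) (c₂ := 0)
    (by unfold barrier; fun_prop) hD.contDiff.continuous hd
  exact ⟨M, hM 0 (left_mem_Icc.2 le_rfl)⟩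

theorem IsAdaptedSqDist.continuous_barrier (hD : IsAdaptedSqDist E b σ t y D k C γ) (τ : ℝ) :
    Continuous fun x => barrier C γ τ (D x) := by
  have := hD.contDiff.continuous
  unfold barrier
  fun_prop

theorem IsAdaptedSqDist.measureReal_closedBall_le (hD : IsAdaptedSqDist E b σ t y D k C γ)
    (hC : 0 ≤ C) (hγ : 0 ≤ γ) {ρ : ℝ} (hρ : 0 < ρ) (ν : Measure ℝ) [IsFiniteMeasure ν] :
    ν.real (Metric.closedBall y ρ) ≤
      Real.exp (1 / (2 * k ^ 2)) * (∫ x, barrier C γ (ρ ^ 2) (D x) ∂ν) * ρ := by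
  set ε := Real.exp (-(1 / (2 * k ^ 2))) * (√(ρ ^ 2))⁻¹ with hε
  obtain ⟨M, hM⟩ := hD.exists_bound_barrier (ρ ^ 2)
  have hint : Integrable (fun x => barrier C γ (ρ ^ 2) (D x)) ν :=
    .of_bound (hD.continuous_barrier _).aestronglyMeasurable M (ae_of_all _ hM)
  have hsub : Metric.closedBall y ρ ⊆ {x | ε ≤ barrier C γ (ρ ^ 2) (D x)} := fun x hx => by
    have hxy : (x - y) ^ 2 ≤ ρ ^ 2 :=
      sq_le_sq.2 ((Metric.mem_closedBall.1 hx).trans (le_abs_self ρ))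
    refine le_barrier hC hγ (by positivity) ((hD.le_sq x).trans ?_)
    rw [div_pow]
    gcongr
  have hmarkov : ε * ν.real (Metric.closedBall y ρ) ≤ ∫ x, barrier C γ (ρ ^ 2) (D x) ∂ν :=
    (mul_le_mul_of_nonneg_left (measureReal_mono hsub) (by positivity)).trans
      (mul_meas_ge_le_integral_of_nonneg (ae_of_all _ fun x => (Real.exp_pos _).le) hint ε)
  calc ν.real (Metric.closedBall y ρ)
      = Real.exp (1 / (2 * k ^ 2)) * (ε * ν.real (Metric.closedBall y ρ)) * ρ := by
        rw [hε, Real.sqrt_sq hρ.le, Real.exp_neg]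
        field_simp
    _ ≤ Real.exp (1 / (2 * k ^ 2)) * (∫ x, barrier C γ (ρ ^ 2) (D x) ∂ν) * ρ := by gcongr

section

variable {Ω : Type*} {m0 : MeasurableSpace Ω} {P : Measure Ω} [IsProbabilityMeasure P]
  {Z : ℝ → Ω → ℝ} {s z c₀ δ : ℝ}

theorem RefDiffusion.integral_barrier_le (hZ : RefDiffusion P E b σ Z s)
    (h0 : ∀ᵐ ω ∂P, Z s ω = z) (hA : A1 E b σ) (hE : IsOpen E)
    (hD : IsAdaptedSqDist E b σ t y D k C γ) (hC : 0 ≤ C) (hγ : 0 < γ) (hγ2 : γ ≤ 1 / 2)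
    (hδ : 0 < δ) (hc₀ : 0 ≤ c₀) (hoff : ∀ x ∉ E, c₀ ≤ D x) (hs : 0 ≤ s) (ht : t ≤ 1) {c₁ : ℝ}
    (hsc : s ≤ c₁) (hct : c₁ ≤ t) (hT : t + δ - c₁ ≤ 1)
    (hT₀ : t + δ - c₁ ≤ 4 * c₀ / (2 + 3 * C) ^ 2) :
    ∫ ω, barrier C γ δ (D (Z t ω)) ∂P ≤ ∫ ω, barrier C γ (t + δ - c₁) (D (Z c₁ ω)) ∂P := by
  simpa using hZ.integral_le_of_isBackwardSupersolution h0 hA hE hs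
    (hD.isTestFunction_barrier hC hγ.ne' hδ)
    (hD.isBackwardSupersolution_barrier hC hγ.le hγ2 hδ hc₀ hoff (hs.trans hsc) hT hT₀) hsc hct ht

/- Over a short time the barrier is run from the starting point, which is at a positive distance
from `y`; otherwise it is run from time `t - τ₁` only, where it is bounded. -/
theorem RefDiffusion.integral_barrier_le_mul_sqrt (hZ : RefDiffusion P E b σ Z s)
    (h0 : ∀ᵐ ω ∂P, Z s ω = z) (hA : A1 E b σ) (hE : IsOpen E)
    (hD : IsAdaptedSqDist E b σ t y D k C γ) (hC : 0 ≤ C) (hγ : 0 < γ) (hγ2 : γ ≤ 1 / 2)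
    (hδ : 0 < δ) (hc₀ : 0 ≤ c₀) (hoff : ∀ x ∉ E, c₀ ≤ D x) (hs : 0 ≤ s) (hst : s ≤ t) (ht : t ≤ 1)
    {τ₁ c : ℝ} (hδτ : δ ≤ τ₁) (hτ₁ : 2 * τ₁ ≤ min 1 (4 * c₀ / (2 + 3 * C) ^ 2)) (hc : 0 < c)
    (hz : c ≤ D z) :
    ∫ ω, barrier C γ δ (D (Z t ω)) ∂P ≤
      Real.exp (2 * C / γ) * ((2 + 3 * C) / c + τ₁⁻¹) * √(t - s + δ) := by
  have hτpos : 0 < τ₁ := hδ.trans_le hδτ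
  obtain ⟨hτ1, hτ₀⟩ := le_min_iff.1 hτ₁
  rcases le_total (t - s) τ₁ with hnear | hfar
  · calc ∫ ω, barrier C γ δ (D (Z t ω)) ∂P
        ≤ ∫ ω, barrier C γ (t + δ - s) (D (Z s ω)) ∂P :=
          hZ.integral_barrier_le h0 hA hE hD hC hγ hγ2 hδ hc₀ hoff hs ht le_rfl hst
            (by linarith) (by linarith)
      _ = barrier C γ (t - s + δ) (D z) := by
          rw [integral_congr_ae (g := fun _ => barrier C γ (t - s + δ) (D z))
            (h0.mono fun ω hω => by simp only [hω, add_sub_right_comm])]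
          simp
      _ ≤ Real.exp (2 * C / γ) * ((2 + 3 * C) / c) * √(t - s + δ) :=
          barrier_le_mul_sqrt hC hγ (by linarith) (by linarith) hc hz
      _ ≤ Real.exp (2 * C / γ) * ((2 + 3 * C) / c + τ₁⁻¹) * √(t - s + δ) := by
          gcongr
          exact le_add_of_nonneg_right (by positivity)
  · obtain ⟨M, hM⟩ := hD.exists_bound_barrier (τ₁ + δ)
    calc ∫ ω, barrier C γ δ (D (Z t ω)) ∂P
        ≤ ∫ ω, barrier C γ (t + δ - (t - τ₁)) (D (Z (t - τ₁) ω)) ∂P :=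
          hZ.integral_barrier_le h0 hA hE hD hC hγ hγ2 hδ hc₀ hoff hs ht (by linarith)
            (by linarith) (by linarith) (by linarith)
      _ = ∫ ω, barrier C γ (τ₁ + δ) (D (Z (t - τ₁) ω)) ∂P := by ring_nf
      _ ≤ ∫ _, Real.exp (2 * C / γ) * (√τ₁)⁻¹ ∂P :=
          integral_mono (hZ.integrable_comp h0 (hst.trans ht) (hD.continuous_barrier _) hM _)
            (integrable_const _) fun ω => barrier_le_inv_sqrt hC hγ hτpos (by linarith)
              (by linarith) (hD.nonneg _)
      _ = Real.exp (2 * C / γ) * τ₁⁻¹ * √τ₁ := by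
          rw [integral_const, probReal_univ, one_smul, mul_assoc, inv_mul_eq_div,
            Real.sqrt_div_self]
      _ ≤ Real.exp (2 * C / γ) * ((2 + 3 * C) / c + τ₁⁻¹) * √(t - s + δ) := by
          gcongr
          · exact le_add_of_nonneg_left (by positivity)
          · linarith

end

/-- `ν` is the law at time `t` of the killed diffusion started from `z` at time `s`. -/
def IsTransitionLaw (E : Set ℝ) (b σ : ℝ → ℝ → ℝ) (s z t : ℝ) (ν : Measure ℝ) : Prop :=
  ∃ (Ω : Type) (_ : MeasurableSpace Ω) (P : Measure Ω) (Z : ℝ → Ω → ℝ), IsProbabilityMeasure P ∧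
    (∀ᵐ ω ∂P, Z s ω = z) ∧ RefDiffusion P E b σ Z s ∧ ν = P.map (Z t)

theorem IsTransitionLaw.isProbabilityMeasure {s z : ℝ} {ν : Measure ℝ}
    (hν : IsTransitionLaw E b σ s z t ν) (hs : s ≤ 1) : IsProbabilityMeasure ν := by
  obtain ⟨Ω, m0, P, Z, hP, h0, hZ, rfl⟩ := hν
  exact Measure.isProbabilityMeasure_map (hZ.measurable h0 hs t).aemeasurable

theorem IsTransitionLaw.measure_ne_zero {s z : ℝ} {ν : Measure ℝ}
    (hν : IsTransitionLaw E b σ s z t ν) (hA : A1 E b σ) (hE : IsOpen E) (hz : z ∈ E)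
    (hs : 0 ≤ s) (hst : s ≤ t) (ht : t ≤ 1) : ν E ≠ 0 := by
  obtain ⟨Ω, m0, P, Z, hP, h0, hZ, rfl⟩ := hν
  exact hZ.map_ne_zero h0 hA hE hz hs hst ht

theorem A1.exists_measureReal_closedBall_le (hA : A1 E b σ) (hE : IsOpen E)
    (ht : t ∈ Icc (0 : ℝ) 1) (hy : y ∈ E) {r : ℝ} (hr : 0 < r) :
    ∃ M, 0 ≤ M ∧ ∀ᶠ ρ in 𝓝[>] (0 : ℝ), ∀ s ∈ Icc 0 t, ∀ z, r ≤ |y - z| → ∀ ν,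
      IsTransitionLaw E b σ s z t ν →
        ν.real (Metric.closedBall y ρ) ≤ M * √(t - s + ρ ^ 2) * ρ := by
  obtain ⟨D, k, C, γ, -, hC, hγ, hγ2, hD⟩ := hA.exists_isAdaptedSqDist ht hy
  obtain ⟨ρ₀, hρ₀, hball⟩ := Metric.isOpen_iff.1 hE y hy
  obtain ⟨c, hc, hcr⟩ := hD.exists_pos_le r hr
  obtain ⟨c₀, hc₀, hcρ₀⟩ := hD.exists_pos_le ρ₀ hρ₀
  have hoff (x) (hx : x ∉ E) : c₀ ≤ D x :=
    hcρ₀ x (not_lt.1 fun h => hx (hball (Metric.mem_ball.2 h)))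
  set τ₁ := min 1 (4 * c₀ / (2 + 3 * C) ^ 2) / 2 with hτ₁
  have hτpos : 0 < τ₁ := by positivity
  have hsmall : ∀ᶠ ρ in 𝓝[>] (0 : ℝ), ρ ^ 2 < τ₁ := nhdsWithin_le_nhds
    ((continuous_pow 2).tendsto' (0 : ℝ) 0 (by simp) |>.eventually_lt_const hτpos)
  refine ⟨Real.exp (1 / (2 * k ^ 2)) * (Real.exp (2 * C / γ) * ((2 + 3 * C) / c + τ₁⁻¹)),
    by positivity, ?_⟩
  filter_upwards [hsmall, self_mem_nhdsWithin] with ρ hρτ (hρ : 0 < ρ) s hs z hyz ν hν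
  have := hν.isProbabilityMeasure (hs.2.trans ht.2)
  obtain ⟨Ω, m0, P, Z, hP, h0, hZ, rfl⟩ := hν
  refine (hD.measureReal_closedBall_le hC hγ.le hρ _).trans ?_
  rw [integral_map (hZ.measurable h0 (hs.2.trans ht.2) t).aemeasurable
    (hD.continuous_barrier _).aestronglyMeasurable]
  gcongr ?_ * ρ
  rw [mul_assoc]
  gcongr
  exact hZ.integral_barrier_le_mul_sqrt h0 hA hE hD hC hγ hγ2 (by positivity) hc₀.le hoff hs.1
    hs.2 ht.2 hρτ.le (by linarith) hc (hcr z (by rwa [abs_sub_comm]))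

end BallMass

section Density

theorem tendsto_setAverage_closedBall {X F : Type*} [PseudoMetricSpace X]
    [MeasurableSpace X] [OpensMeasurableSpace X] [NormedAddCommGroup F] [NormedSpace ℝ F]
    [CompleteSpace F] [SecondCountableTopologyEither X F] {μ : Measure X}
    [IsLocallyFiniteMeasure μ] [μ.IsOpenPosMeasure] {E : Set X} {f : X → F}
    (hf : ContinuousOn f E) (hE : IsOpen E) {y : X} (hy : y ∈ E) :
    Tendsto (fun ρ => ⨍ x in Metric.closedBall y ρ, f x ∂μ) (𝓝[>] 0) (𝓝 (f y)) := by
  have hballs : Tendsto (Metric.closedBall y) (𝓝[>] (0 : ℝ)) (𝓝 y).smallSets :=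
    (tendsto_closedBall_smallSets y).mono_left nhdsWithin_le_nhds
  have hfin : ∀ᶠ ρ in 𝓝[>] (0 : ℝ), μ (Metric.closedBall y ρ) < ∞ :=
    hballs.eventually (μ.finiteAt_nhds y).eventually
  have hlim := (((hf.continuousAt (hE.mem_nhds hy)).integral_sub_linear_isLittleO_ae (μ := μ)
    (hf.stronglyMeasurableAtFilter hE y hy) hballs).tendsto_inv_smul_nhds_zero).add_const (f y)
  rw [zero_add] at hlim
  refine hlim.congr' ?_
  filter_upwards [hfin, self_mem_nhdsWithin] with ρ hρ (hρ0 : 0 < ρ)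
  have hpos : μ.real (Metric.closedBall y ρ) ≠ 0 :=
    (ENNReal.toReal_pos (Metric.measure_closedBall_pos μ y hρ0).ne' hρ.ne).ne'
  rw [setAverage_eq, smul_sub, inv_smul_smul₀ hpos, sub_add_cancel]

/-- `f` is a density, continuous on `E`, of the restriction of `ν` to `E`. As `ν A` is expressed
through a Bochner integral, neither integrability nor nonnegativity of `f` is part of the
definition. -/
def HasContinuousDensityOn (ν : Measure ℝ) (E : Set ℝ) (f : ℝ → ℝ) : Prop :=
  ContinuousOn f E ∧ ∀ A, MeasurableSet A → A ⊆ E → ν A = ENNReal.ofReal (∫ y in A, f y)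

namespace HasContinuousDensityOn

variable {E A : Set ℝ} {ν : Measure ℝ} {f : ℝ → ℝ}

theorem setIntegral_pos (hf : HasContinuousDensityOn ν E f) (hE : MeasurableSet E)
    (h0 : ν E ≠ 0) : 0 < ∫ y in E, f y :=
  ENNReal.ofReal_pos.1 (hf.2 E hE Subset.rfl ▸ pos_iff_ne_zero.2 h0)

theorem integrableOn (hf : HasContinuousDensityOn ν E f) (hE : MeasurableSet E) (h0 : ν E ≠ 0) :
    IntegrableOn f E :=
  not_imp_comm.1 integral_undef (hf.setIntegral_pos hE h0).ne'

theorem setIntegral_nonneg (hf : HasContinuousDensityOn ν E f) (hE : MeasurableSet E)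
    (h0 : ν E ≠ 0) (hA : MeasurableSet A) (hAE : A ⊆ E) : 0 ≤ ∫ y in A, f y := by
  by_contra! hneg
  have hνA : ν A = 0 := by rw [hf.2 A hA hAE, ENNReal.ofReal_of_nonpos hneg.le]
  have hpos := hf.setIntegral_pos hE h0
  have hdiff := hf.2 (E \ A) (hE.diff hA) sdiff_subset
  rw [measure_sdiff_null hνA, hf.2 E hE Subset.rfl,
    setIntegral_sdiff hA (hf.integrableOn hE h0) hAE,
    ENNReal.ofReal_eq_ofReal_iff hpos.le (by linarith)] at hdiff
  linarith

theorem nonneg (hf : HasContinuousDensityOn ν E f) (hE : IsOpen E) (h0 : ν E ≠ 0) {y : ℝ}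
    (hy : y ∈ E) : 0 ≤ f y := by
  have hsub : ∀ᶠ ρ in 𝓝[>] (0 : ℝ), Metric.closedBall y ρ ⊆ E :=
    nhdsWithin_le_nhds (eventually_closedBall_subset (hE.mem_nhds hy))
  refine ge_of_tendsto (tendsto_setAverage_closedBall (μ := volume) hf.1 hE hy)
    (hsub.mono fun ρ hρ => ?_)
  rw [setAverage_eq]
  exact mul_nonneg (inv_nonneg.2 measureReal_nonneg)
    (hf.setIntegral_nonneg hE.measurableSet h0 measurableSet_closedBall hρ)

theorem setIntegral_abs_le_one [IsProbabilityMeasure ν] (hf : HasContinuousDensityOn ν E f)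
    (hE : IsOpen E) (h0 : ν E ≠ 0) (hA : MeasurableSet A) (hAE : A ⊆ E) :
    ∫ y in A, |f y| ≤ 1 := by
  rw [setIntegral_congr_fun hA fun y hy => abs_of_nonneg (hf.nonneg hE h0 (hAE hy))]
  exact ENNReal.ofReal_le_one.1 (hf.2 A hA hAE ▸ prob_le_one)

theorem le_of_measureReal_closedBall_le (hf : HasContinuousDensityOn ν E f) (hE : IsOpen E)
    {y L : ℝ} (hy : y ∈ E) {h : ℝ → ℝ} (hh : Tendsto h (𝓝[>] 0) (𝓝 L))
    (hν : ∀ᶠ ρ in 𝓝[>] (0 : ℝ), ν.real (Metric.closedBall y ρ) ≤ h ρ * (2 * ρ)) : f y ≤ L := by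
  have hsub : ∀ᶠ ρ in 𝓝[>] (0 : ℝ), Metric.closedBall y ρ ⊆ E :=
    nhdsWithin_le_nhds (eventually_closedBall_subset (hE.mem_nhds hy))
  refine le_of_tendsto_of_tendsto
    (tendsto_setAverage_closedBall (μ := volume) hf.1 hE hy) hh ?_
  filter_upwards [hν, hsub, self_mem_nhdsWithin] with ρ hνρ hρE (hρ : 0 < ρ)
  have hle : ∫ x in Metric.closedBall y ρ, f x ≤ ν.real (Metric.closedBall y ρ) := by
    rw [measureReal_def, hf.2 _ measurableSet_closedBall hρE, ENNReal.toReal_ofReal']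
    exact le_max_left _ _
  rw [setAverage_eq, Real.volume_real_closedBall hρ.le, smul_eq_mul,
    inv_mul_le_iff₀ (by positivity), mul_comm]
  exact hle.trans hνρ

end HasContinuousDensityOn

theorem tendsto_integral_mul_zero {α ι : Type*} [MeasurableSpace α] {μ : Measure α}
    {l : Filter ι} {p g : ι → α → ℝ} {ε : ι → ℝ} {C : ℝ}
    (hint : ∀ᶠ i in l, Integrable (p i) μ) (hp : ∀ᶠ i in l, ∫ x, |p i x| ∂μ ≤ C)
    (hg : ∀ᶠ i in l, ∀ᵐ x ∂μ, |g i x| ≤ ε i) (hε : Tendsto ε l (𝓝 0)) :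
    Tendsto (fun i => ∫ x, p i x * g i x ∂μ) l (𝓝 0) := by
  refine squeeze_zero_norm' (a := fun i => C * |ε i|) ?_ (by simpa using hε.abs.const_mul C)
  filter_upwards [hint, hp, hg] with i hi hpi hgi
  calc ‖∫ x, p i x * g i x ∂μ‖ ≤ ∫ x, |p i x| * |ε i| ∂μ :=
        norm_integral_le_of_norm_le (hi.abs.mul_const _) (hgi.mono fun x hx => by
          rw [norm_mul]
          exact mul_le_mul_of_nonneg_left (hx.trans (le_abs_self _)) (norm_nonneg _))
    _ = (∫ x, |p i x| ∂μ) * |ε i| := integral_mul_const _ _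
    _ ≤ C * |ε i| := by gcongr

/-- `q` is a version of the transition density of the killed diffusion on `E` that is continuous in
the terminal point. -/
def IsContinuousTransitionDensity (E : Set ℝ) (b σ : ℝ → ℝ → ℝ) (q : ℝ → ℝ → ℝ → ℝ → ℝ) : Prop :=
  ∀ t ∈ Ioc (0 : ℝ) 1, ∀ s ∈ Ico 0 t, ∀ z ∈ E,
    ∃ ν, IsTransitionLaw E b σ s z t ν ∧ HasContinuousDensityOn ν E (q s t z)

namespace IsContinuousTransitionDensity

variable {E A : Set ℝ} {b σ : ℝ → ℝ → ℝ} {q : ℝ → ℝ → ℝ → ℝ → ℝ} {t s z y : ℝ}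

theorem nonneg (hq : IsContinuousTransitionDensity E b σ q) (hA1 : A1 E b σ) (hE : IsOpen E)
    (ht : t ∈ Ioc (0 : ℝ) 1) (hs : s ∈ Ico 0 t) (hz : z ∈ E) (hy : y ∈ E) : 0 ≤ q s t z y := by
  obtain ⟨ν, hν, hf⟩ := hq t ht s hs z hz
  exact hf.nonneg hE (hν.measure_ne_zero hA1 hE hz hs.1 hs.2.le ht.2) hy

theorem integrableOn (hq : IsContinuousTransitionDensity E b σ q) (hA1 : A1 E b σ) (hE : IsOpen E)
    (ht : t ∈ Ioc (0 : ℝ) 1) (hs : s ∈ Ico 0 t) (hz : z ∈ E) : IntegrableOn (q s t z) E := by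
  obtain ⟨ν, hν, hf⟩ := hq t ht s hs z hz
  exact hf.integrableOn hE.measurableSet (hν.measure_ne_zero hA1 hE hz hs.1 hs.2.le ht.2)

theorem setIntegral_abs_le_one (hq : IsContinuousTransitionDensity E b σ q) (hA1 : A1 E b σ)
    (hE : IsOpen E) (ht : t ∈ Ioc (0 : ℝ) 1) (hs : s ∈ Ico 0 t) (hz : z ∈ E)
    (hA : MeasurableSet A) (hAE : A ⊆ E) : ∫ u in A, |q s t z u| ≤ 1 := by
  obtain ⟨ν, hν, hf⟩ := hq t ht s hs z hz
  have := hν.isProbabilityMeasure (hs.2.le.trans ht.2)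
  exact hf.setIntegral_abs_le_one hE (hν.measure_ne_zero hA1 hE hz hs.1 hs.2.le ht.2) hA hAE

theorem exists_le_mul_sqrt (hq : IsContinuousTransitionDensity E b σ q) (hA1 : A1 E b σ)
    (hE : IsOpen E) (ht : t ∈ Ioc (0 : ℝ) 1) (hy : y ∈ E) {r : ℝ} (hr : 0 < r) :
    ∃ M, 0 ≤ M ∧ ∀ s ∈ Ico 0 t, ∀ z ∈ E, r ≤ |y - z| → q s t z y ≤ M * √(t - s) := by
  obtain ⟨M, hM, hball⟩ := hA1.exists_measureReal_closedBall_le hE (Ioc_subset_Icc_self ht) hy hr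
  refine ⟨M / 2, by positivity, fun s hs z hz hyz => ?_⟩
  obtain ⟨ν, hν, hf⟩ := hq t ht s hs z hz
  have hlim : Tendsto (fun ρ : ℝ => M / 2 * √(t - s + ρ ^ 2)) (𝓝[>] 0) (𝓝 (M / 2 * √(t - s))) :=
    tendsto_nhdsWithin_of_tendsto_nhds (Continuous.tendsto' (by fun_prop) _ _ (by simp))
  exact hf.le_of_measureReal_closedBall_le hE hy hlim
    (hball.mono fun ρ hρ => (hρ s (Ico_subset_Icc_self hs) z hyz ν hν).trans_eq (by ring))

theorem tendsto_setIntegral_mul_zero (hq : IsContinuousTransitionDensity E b σ q) (hA1 : A1 E b σ)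
    (hE : IsOpen E) (ht : t ∈ Ioc (0 : ℝ) 1) {x : ℝ} (hx : x ∈ E) (hz : z ∈ E) {r : ℝ}
    (hr : 0 < r) :
    Tendsto (fun s => ∫ u in {u | u ∈ E ∧ r ≤ |u - z|}, q 0 (t - s) x u * q (t - s) t u z)
      (𝓝[>] 0) (𝓝 0) := by
  obtain ⟨M, -, hle⟩ := hq.exists_le_mul_sqrt hA1 hE ht hz hr
  have hA : MeasurableSet {u | u ∈ E ∧ r ≤ |u - z|} :=
    hE.measurableSet.inter (measurableSet_le (f := fun _ => r) (g := fun u => |u - z|)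
      (by fun_prop) (by fun_prop))
  have hsmall : ∀ᶠ s in 𝓝[>] (0 : ℝ), s ∈ Ioo 0 t := Ioo_mem_nhdsGT ht.1
  have hτ {s} (hs : s ∈ Ioo 0 t) : t - s ∈ Ioc (0 : ℝ) 1 :=
    ⟨sub_pos.2 hs.2, (sub_le_self t hs.1.le).trans ht.2⟩
  refine tendsto_integral_mul_zero (C := 1) (ε := fun s => M * √s)
    (hsmall.mono fun s hs => ?_) (hsmall.mono fun s hs => ?_) (hsmall.mono fun s hs => ?_)
    (tendsto_nhdsWithin_of_tendsto_nhds (Continuous.tendsto' (by fun_prop) _ _ (by simp)))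
  · exact (hq.integrableOn hA1 hE (hτ hs) ⟨le_rfl, (hτ hs).1⟩ hx).mono_set (sep_subset _ _)
  · exact hq.setIntegral_abs_le_one hA1 hE (hτ hs) ⟨le_rfl, (hτ hs).1⟩ hx hA (sep_subset _ _)
  · have hts : t - s ∈ Ico 0 t := ⟨(hτ hs).1.le, sub_lt_self t hs.1⟩
    filter_upwards [ae_restrict_mem hA] with u ⟨huE, hur⟩
    simpa [abs_of_nonneg (hq.nonneg hA1 hE ht hts huE hz)] using
      hle (t - s) hts u huE (by rwa [abs_sub_comm])

theorem of_continuousOn {κ : ℝ → ℝ → ℝ → Measure ℝ}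
    (hκ : ∀ s ∈ Ico (0 : ℝ) 1, ∀ z ∈ E,
      ∃ (Ω : Type) (_ : MeasurableSpace Ω) (P : Measure Ω) (Z : ℝ → Ω → ℝ),
        IsProbabilityMeasure P ∧ (∀ᵐ ω ∂P, Z s ω = z) ∧ RefDiffusion P E b σ Z s ∧
        ∀ t ∈ Icc s 1, κ s z t = P.map (Z t))
    (hq : ∀ s ∈ Ico (0 : ℝ) 1, ∀ z ∈ E, ∀ t ∈ Ioc s 1, ∀ A : Set ℝ, MeasurableSet A → A ⊆ E →
      κ s z t A = ENNReal.ofReal (∫ y in A, q s t z y))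
    (hcont : ∀ t ∈ Ioc (0 : ℝ) 1,
      ContinuousOn (fun p : ℝ × ℝ × ℝ => q p.1 t p.2.1 p.2.2) (Ico 0 t ×ˢ E ×ˢ E)) :
    IsContinuousTransitionDensity E b σ q := by
  refine fun t ht s hs z hz => ⟨κ s z t, ?_, ?_, ?_⟩
  · obtain ⟨Ω, m0, P, Z, hP, h0, hZ, hκP⟩ := hκ s ⟨hs.1, hs.2.trans_le ht.2⟩ z hz
    exact ⟨Ω, m0, P, Z, hP, h0, hZ, hκP t ⟨hs.2.le, ht.2⟩⟩
  · exact (hcont t ht).comp (f := fun y => (s, z, y)) (by fun_prop) fun y hy => ⟨hs, hz, hy⟩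
  · exact hq s ⟨hs.1, hs.2.trans_le ht.2⟩ z hz t ⟨hs.2, ht.2⟩

end IsContinuousTransitionDensity

end Density

theorem killed_diffusion_transition_density_offdiagonal_general
    {E : Set ℝ} (hE : IsOpen E) {b σ : ℝ → ℝ → ℝ} (hA1 : A1 E b σ) {q : ℝ → ℝ → ℝ → ℝ → ℝ}
    (hq : IsContinuousTransitionDensity E b σ q) {r : ℝ} (hr : 0 < r) {t : ℝ}
    (ht : t ∈ Ioc (0 : ℝ) 1) :
    (∀ y ∈ E, ∃ M : ℝ, ∀ s ∈ Ico (0 : ℝ) t, ∀ z ∈ E, r ≤ |y - z| → q s t z y ≤ M) ∧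
      ∀ x ∈ E, ∀ z ∈ E, Tendsto (fun s => ∫ u in {u | u ∈ E ∧ r ≤ |u - z|},
        q 0 (t - s) x u * q (t - s) t u z) (𝓝[>] (0 : ℝ)) (𝓝 0) := by
  refine ⟨fun y hy => ?_, fun x hx z hz => hq.tendsto_setIntegral_mul_zero hA1 hE ht hx hz hr⟩
  obtain ⟨M, hM, hle⟩ := hq.exists_le_mul_sqrt hA1 hE ht hy hr
  exact ⟨M, fun s hs z hz hyz => (hle s hs z hz hyz).trans
    (mul_le_of_le_one_right hM (Real.sqrt_le_one.2 (by linarith [hs.1, ht.2])))⟩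

/-- **Proposition 2.1 (3).** Under Assumption (A1): (i) for any `r > 0`,
`y ∈ E`, `t > 0`, the transition density `q(s,t;z,y)` is bounded uniformly over `s < t` and
`z ∈ E` with `|y − z| ≥ r`; (ii) for every `x ∈ E`,
`∫_{B_r^c(z)} q(0,t−s;x,u) q(t−s,t;u,z) du → 0` as `s → 0⁺`. -/
theorem killed_diffusion_transition_density_offdiagonal
    (ℓ : EReal) (E : Set ℝ) (hE : E = {x : ℝ | ℓ < (x : EReal)})
    (b σ : ℝ → ℝ → ℝ) (hA1 : A1 E b σ)
    (κ : ℝ → ℝ → ℝ → Measure ℝ)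
    (hκ : ∀ s ∈ Ico (0:ℝ) 1, ∀ z ∈ E,
      ∃ (Ω : Type) (m0 : MeasurableSpace Ω) (P : Measure Ω) (Z : ℝ → Ω → ℝ),
        IsProbabilityMeasure P ∧ (∀ᵐ ω ∂P, Z s ω = z) ∧
        RefDiffusion P E b σ Z s ∧
        ∀ t ∈ Icc s 1, κ s z t = P.map (Z t))
    -- `q` is the (regular version of the) transition density of the killed diffusion:
    (q : ℝ → ℝ → ℝ → ℝ → ℝ)
    (hq : ∀ s ∈ Ico (0:ℝ) 1, ∀ z ∈ E, ∀ t ∈ Ioc s 1, ∀ A : Set ℝ,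
        MeasurableSet A → A ⊆ E → κ s z t A = ENNReal.ofReal (∫ y in A, q s t z y))
    (hqreg : ∀ t ∈ Ioc (0:ℝ) 1,
        ContinuousOn (fun p : ℝ × ℝ × ℝ => q p.1 t p.2.1 p.2.2) (Ico 0 t ×ˢ E ×ˢ E)) :
    ∀ r : ℝ, 0 < r → ∀ t ∈ Ioc (0:ℝ) 1,
      -- (i) off-diagonal boundedness
      (∀ y ∈ E, ∃ M : ℝ,
        ∀ s ∈ Ico (0:ℝ) t, ∀ z ∈ E, r ≤ |y - z| → q s t z y ≤ M) ∧
      -- (ii) vanishing of the off-diagonal Chapman–Kolmogorov mass as `s → 0⁺`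
      (∀ x ∈ E, ∀ z ∈ E,
        Tendsto (fun s => ∫ u in {u | u ∈ E ∧ r ≤ |u - z|},
            q 0 (t - s) x u * q (t - s) t u z) (𝓝[>] (0:ℝ)) (𝓝 0)) := by
  have hopen : IsOpen E := hE ▸ isOpen_lt continuous_const continuous_coe_real_ereal
  exact fun r hr t ht => killed_diffusion_transition_density_offdiagonal_general hopen hA1
    (.of_continuousOn hκ hq hqreg) hr ht

end
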